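/- arXiv:2109.13888 — 2 statements merged into one kernel-verified Lean document; each statement's English description precedes it below -/
import Mathlib

section
/- Let σ ∈ S₅ be the permutation with σ(1)=4, σ(2)=3, σ(3)=5, σ(4)=2, σ(5)=1 (complete notation [43521]). The set BL_σ ⊂ Lo¹₅ has exactly 48 connected components, and every connected component of BL_σ is contractible. -/
open Matrix

/-- The group `Lo¹_m` of real lower triangular `m × m` matrices with
all diagonal entries equal to `1`, viewed as a subset of the matrix space. -/
def Lo1 (m : ℕ) : Set (Matrix (Fin m) (Fin m) ℝ) :=
  {L | (∀ i, L i i = 1) ∧ ∀ i j : Fin m, i < j → L i j = 0}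

/-- The set of invertible real upper triangular `m × m` matrices. -/
def UpInv (m : ℕ) : Set (Matrix (Fin m) (Fin m) ℝ) :=
  {U | (∀ i j : Fin m, j < i → U i j = 0) ∧ IsUnit U.det}

/-- The permutation matrix of `σ`, with `(P_σ)_{i, σ(i)} = 1` and `0` otherwise. -/
def permMat (m : ℕ) (σ : Equiv.Perm (Fin m)) : Matrix (Fin m) (Fin m) ℝ :=
  fun i j => if σ i = j then 1 else 0

/-- The Bruhat cell `Bru_σ^GL = { U₀ P_σ U₁ : U₀, U₁ upper triangular invertible }`. -/
def Bru (m : ℕ) (σ : Equiv.Perm (Fin m)) : Set (Matrix (Fin m) (Fin m) ℝ) :=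
  {M | ∃ U₀ ∈ UpInv m, ∃ U₁ ∈ UpInv m, M = U₀ * permMat m σ * U₁}

/-- `BL_σ = Lo¹ ∩ Bru_σ^GL`. -/
def BL (m : ℕ) (σ : Equiv.Perm (Fin m)) : Set (Matrix (Fin m) (Fin m) ℝ) :=
  Lo1 m ∩ Bru m σ

/-- The permutation `[43521] ∈ S₅` (in `1`-indexed complete notation), i.e.
`σ(1)=4, σ(2)=3, σ(3)=5, σ(4)=2, σ(5)=1`, written `0`-indexed on `Fin 5`. -/
def σ43521 : Equiv.Perm (Fin 5) :=
  ⟨![3, 2, 4, 1, 0], ![4, 3, 1, 0, 2], by decide, by decide⟩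

/-!
Gaussian elimination turns membership of `L ∈ Lo¹₅` in the Bruhat cell into the non-vanishing of
four minors together with two equations that determine `L 2 0` and `L 2 1`. In normalized minors
`((g, E, K, F), (l, D), (a, H))` the four conditions say that `g` and `E` are nonzero, that
`(K, F)` is not orthogonal to `z(l, D)` and that it is not orthogonal to `i z(a, H)`, where
`z(l, D) = (1 - l D) - i l` runs over the plane slit along the negative real axis.

With `θ` and `φ` the arguments of the two slit-plane points, `(K, F)` is confined to the
intersection of two open half-planes once the signs of all conditions are fixed. This is a convex
cone, empty exactly when the two half-planes are opposite, that is, when `1 ± sin (θ - φ) = 0`.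
Removing these lines from the square `(-π, π)²` leaves three convex strips for either sign. So
there are `2 ^ 4 * 3 = 48` pieces, each fibred over a convex strip with fibres star-shaped about
the values of a global section.
-/

section Topology

variable {X Y ι : Type*} [TopologicalSpace X] [TopologicalSpace Y]

theorem isClopen_of_pairwise_disjoint_iUnion_eq_univ {U : ι → Set X} (hopen : ∀ i, IsOpen (U i))
    (hdisj : Pairwise (Function.onFun Disjoint U)) (hcover : ⋃ i, U i = Set.univ) (i : ι) :
    IsClopen (U i) := by
  refine ⟨isOpen_compl_iff.mp ?_, hopen i⟩
  have hcompl : (U i)ᶜ = ⋃ j ∈ {j | j ≠ i}, U j := by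
    ext x
    obtain ⟨j, hj⟩ := Set.mem_iUnion.mp (hcover ▸ Set.mem_univ x)
    simp only [Set.mem_compl_iff, Set.mem_iUnion, Set.mem_ofPred_eq, exists_prop]
    refine ⟨fun hx => ⟨j, fun hji => hx (hji ▸ hj), hj⟩, ?_⟩
    rintro ⟨k, hki, hk⟩ hi
    exact Set.disjoint_left.mp (hdisj hki) hk hi
  rw [hcompl]
  exact isOpen_biUnion fun j _ => hopen j

theorem connectedComponent_eq_of_isClopen_of_isPreconnected {U : Set X} (hU : IsClopen U)
    (hconn : IsPreconnected U) {x : X} (hx : x ∈ U) : connectedComponent x = U :=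
  (hU.connectedComponent_subset hx).antisymm (hconn.subset_connectedComponent hx)

theorem card_connectedComponents_and_contractibleSpace_of_isEmbedding {e : X → Y}
    (he : Topology.IsEmbedding e) {S : ι → Set Y} (hopen : ∀ i, IsOpen (S i))
    (hdisj : Pairwise (Function.onFun Disjoint S)) (hcontr : ∀ i, ContractibleSpace (S i))
    (hrange : Set.range e = ⋃ i, S i) :
    Nat.card (ConnectedComponents X) = Nat.card ι ∧
      ∀ x : X, ContractibleSpace (connectedComponent x) := by
  let U : ι → Set X := fun i => e ⁻¹' S i
  have hcover : ⋃ i, U i = Set.univ := by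
    rw [← Set.preimage_iUnion, ← hrange, Set.preimage_range]
  have hUdisj : Pairwise (Function.onFun Disjoint U) := fun i j hij => (hdisj hij).preimage e
  have hclopen : ∀ i, IsClopen (U i) := isClopen_of_pairwise_disjoint_iUnion_eq_univ
    (fun i => (hopen i).preimage he.continuous) hUdisj hcover
  have hUcontr : ∀ i, ContractibleSpace (U i) := fun i => by
    have himage : e '' U i = S i :=
      Set.image_preimage_eq_of_subset (hrange ▸ Set.subset_iUnion S i)
    exact ((he.homeomorphImage (U i)).trans
      (Homeomorph.setCongr himage)).contractibleSpace_iff.mpr (hcontr i)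
  have hconn : ∀ i, IsConnected (U i) := fun i =>
    isConnected_iff_connectedSpace.mpr inferInstance
  refine ⟨Nat.card_congr
    (ConnectedComponents.equivOfIsClopenOfIsConnected hclopen hUdisj hcover hconn), fun x => ?_⟩
  obtain ⟨i, hi⟩ := Set.mem_iUnion.mp (hcover ▸ Set.mem_univ x)
  rw [connectedComponent_eq_of_isClopen_of_isPreconnected (hclopen i) (hconn i).isPreconnected hi]
  exact hUcontr i

end Topology

section Fibration

variable {X Y : Type*} [TopologicalSpace X] [TopologicalSpace Y] [AddCommGroup Y]
  [IsTopologicalAddGroup Y] [Module ℝ Y] [ContinuousSMul ℝ Y]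

theorem contractibleSpace_of_segment_subset {S : Set Y} {B : Set X} [ContractibleSpace B]
    {p : Y → X} {c : X → Y} (hp : ContinuousOn p S) (hpB : Set.MapsTo p S B)
    (hc : ContinuousOn c B) (hcS : Set.MapsTo c B S)
    (hsegment : ∀ y ∈ S, segment ℝ y (c (p y)) ⊆ S) : ContractibleSpace S := by
  let proj : C(S, B) := ⟨_, hp.mapsToRestrict hpB⟩
  let sec : C(B, S) := ⟨_, hc.mapsToRestrict hcS⟩
  have hcp : Continuous fun y : S => c (p y) :=
    continuous_subtype_val.comp (sec.continuous.comp proj.continuous)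
  have homotopy : (ContinuousMap.id S).Homotopic (sec.comp proj) :=
    ⟨{ toFun := fun q => ⟨AffineMap.lineMap (q.2 : Y) (c (p q.2)) (q.1 : ℝ),
          hsegment q.2 q.2.2 (segment_eq_image_lineMap ℝ (q.2 : Y) _ ▸ ⟨q.1, q.1.2, rfl⟩)⟩
       continuous_toFun := by
         simp only [AffineMap.lineMap_apply_module]
         exact .subtype_mk (.add (by fun_prop) (.smul (by fun_prop) (hcp.comp continuous_snd))) _
       map_zero_left := fun y => Subtype.ext (AffineMap.lineMap_apply_zero _ _)
       map_one_left := fun y => Subtype.ext (AffineMap.lineMap_apply_one _ _) }⟩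
  obtain ⟨y, hy⟩ := ((id_nullhomotopic B).comp_left proj).comp_right sec
  exact (contractible_iff_id_nullhomotopic S).mpr ⟨y, homotopy.trans hy⟩

end Fibration

section SlitPlane

open Real

/-- The point `(1 - l * d) - l * i` of the slit plane attached to `(l, d) ∈ ℝ²`. -/
def slitPoint (v : ℝ × ℝ) : ℂ :=
  ⟨1 - v.1 * v.2, -v.1⟩

theorem slitPoint_mem_slitPlane (v : ℝ × ℝ) : slitPoint v ∈ Complex.slitPlane := by
  rw [Complex.mem_slitPlane_iff]
  by_cases h : v.1 = 0
  · exact .inl (by simp [slitPoint, h])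
  · exact .inr (by simp [slitPoint, h])

theorem norm_slitPoint_pos (v : ℝ × ℝ) : 0 < ‖slitPoint v‖ :=
  norm_pos_iff.mpr (Complex.slitPlane_ne_zero (slitPoint_mem_slitPlane v))

theorem continuous_slitPoint : Continuous slitPoint := by
  have hcoords : Continuous fun v : ℝ × ℝ => (1 - v.1 * v.2, -v.1) := by fun_prop
  exact Complex.equivRealProdCLM.symm.continuous.comp hcoords

theorem continuous_arg_slitPoint : Continuous fun v => (slitPoint v).arg :=
  Complex.continuousOn_arg.comp_continuous continuous_slitPoint slitPoint_mem_slitPlane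

theorem abs_arg_slitPoint_lt_pi (v : ℝ × ℝ) : |(slitPoint v).arg| < π :=
  (Complex.abs_arg_le_pi _).lt_of_ne fun h => by
    have := Complex.slitPlane_arg_ne_pi (slitPoint_mem_slitPlane v)
    rcases abs_eq_abs.mp (h.trans (abs_of_pos pi_pos).symm) with h | h
    · exact this h
    · exact (Complex.neg_pi_lt_arg _).ne' h

theorem one_add_cos_pos {x : ℝ} (hx : |x| < π) : 0 < 1 + cos x := by
  have := cos_lt_cos_of_nonneg_of_le_pi (abs_nonneg x) le_rfl hx
  rw [cos_abs, cos_pi] at this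
  linarith

theorem one_sub_mul_sin_eq {θ : ℝ} (hθ : |θ| < π) (d : ℝ) :
    1 - (d + sin θ / (1 + cos θ)) * sin θ = cos θ - d * sin θ := by
  have := (one_add_cos_pos hθ).ne'
  field_simp
  linear_combination -sin_sq_add_cos_sq θ

/-- The polar-type coordinates `(θ, s)` of `(l, d)`: `θ` is the argument of `slitPoint (l, d)` and
`s = d + tan (θ / 2)`. The shift of `d` makes every admissible set of `s` contain `0`. -/
noncomputable def slitPolar (v : ℝ × ℝ) : ℝ × ℝ :=
  ((slitPoint v).arg, v.2 + sin (slitPoint v).arg / (1 + cos (slitPoint v).arg))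

/-- The inverse of `slitPolar` on `polarDomain`. -/
noncomputable def slitPolarInv (w : ℝ × ℝ) : ℝ × ℝ :=
  (-sin w.1 / (1 - w.2 * sin w.1), w.2 - sin w.1 / (1 + cos w.1))

/-- The range of `slitPolar`. -/
def polarDomain : Set (ℝ × ℝ) :=
  {w | |w.1| < π ∧ w.2 * sin w.1 < 1}

theorem norm_slitPoint_eq_inv (v : ℝ × ℝ) :
    ‖slitPoint v‖ = (1 - (slitPolar v).2 * sin (slitPolar v).1)⁻¹ := by
  have hre : _ = 1 - v.1 * v.2 := Complex.norm_mul_cos_arg (slitPoint v)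
  have him : _ = -v.1 := Complex.norm_mul_sin_arg (slitPoint v)
  refine eq_inv_of_mul_eq_one_left ?_
  rw [slitPolar, one_sub_mul_sin_eq (abs_arg_slitPoint_lt_pi v)]
  linear_combination hre - v.2 * him

theorem slitPolar_mem_polarDomain (v : ℝ × ℝ) : slitPolar v ∈ polarDomain :=
  ⟨abs_arg_slitPoint_lt_pi v,
    sub_pos.mp (inv_pos.mp (norm_slitPoint_eq_inv v ▸ norm_slitPoint_pos v))⟩

theorem slitPolarInv_slitPolar (v : ℝ × ℝ) : slitPolarInv (slitPolar v) = v := by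
  have hl : -sin (slitPolar v).1 / (1 - (slitPolar v).2 * sin (slitPolar v).1) = v.1 := by
    rw [div_eq_inv_mul, ← norm_slitPoint_eq_inv, mul_neg, slitPolar, Complex.norm_mul_sin_arg]
    exact neg_neg v.1
  exact Prod.ext hl (add_sub_cancel_right _ _)

theorem slitPoint_slitPolarInv {w : ℝ × ℝ} (hw : w ∈ polarDomain) :
    slitPoint (slitPolarInv w) =
      ((1 - w.2 * sin w.1)⁻¹ : ℝ) * (Complex.cos w.1 + Complex.sin w.1 * Complex.I) := by
  have hne : 1 - w.2 * sin w.1 ≠ 0 := (sub_pos.mpr hw.2).ne'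
  have hsin : 1 - w.2 * sin w.1 = cos w.1 - (w.2 - sin w.1 / (1 + cos w.1)) * sin w.1 := by
    rw [← one_sub_mul_sin_eq hw.1, sub_add_cancel]
  rw [← Complex.ofReal_cos, ← Complex.ofReal_sin]
  apply Complex.ext
  · rw [Complex.re_ofReal_mul, Complex.add_re, Complex.re_ofReal_mul, Complex.I_re, mul_zero,
      add_zero, Complex.ofReal_re]
    simp only [slitPoint, slitPolarInv]
    rw [inv_mul_eq_div, eq_div_iff hne, sub_mul, one_mul, div_mul_eq_mul_div, div_mul_cancel₀ _ hne]
    linear_combination hsin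
  · rw [Complex.im_ofReal_mul, Complex.add_im, Complex.im_ofReal_mul, Complex.I_im, mul_one,
      Complex.ofReal_im, zero_add, inv_mul_eq_div]
    simp only [slitPoint, slitPolarInv, neg_div, neg_neg]

theorem slitPolar_slitPolarInv {w : ℝ × ℝ} (hw : w ∈ polarDomain) :
    slitPolar (slitPolarInv w) = w := by
  have harg : (slitPoint (slitPolarInv w)).arg = w.1 := by
    rw [slitPoint_slitPolarInv hw]
    exact Complex.arg_mul_cos_add_sin_mul_I (inv_pos.mpr (sub_pos.mpr hw.2))
      ⟨(abs_lt.mp hw.1).1, (abs_lt.mp hw.1).2.le⟩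
  refine Prod.ext harg ?_
  simp only [slitPolar, harg]
  exact sub_add_cancel _ _

theorem continuous_slitPolar : Continuous slitPolar := by
  have harg := continuous_arg_slitPoint
  have hne := fun v => (one_add_cos_pos (abs_arg_slitPoint_lt_pi v)).ne'
  unfold slitPolar
  fun_prop (disch := exact hne _)

theorem continuousOn_slitPolarInv : ContinuousOn slitPolarInv polarDomain := by
  unfold slitPolarInv
  exact .prodMk
    (.div (by fun_prop) (by fun_prop) fun w hw => (sub_pos.mpr hw.2).ne')
    (.sub (by fun_prop)
      (.div (by fun_prop) (by fun_prop) fun w hw => (one_add_cos_pos hw.1).ne'))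

theorem isEmbedding_slitPolar : Topology.IsEmbedding slitPolar := by
  let h : ℝ × ℝ ≃ₜ polarDomain :=
    { toFun := fun v => ⟨slitPolar v, slitPolar_mem_polarDomain v⟩
      invFun := fun w => slitPolarInv w
      left_inv := slitPolarInv_slitPolar
      right_inv := fun w => Subtype.ext (slitPolar_slitPolarInv w.2)
      continuous_toFun := continuous_slitPolar.subtype_mk _
      continuous_invFun := continuousOn_iff_continuous_domRestrict.mp continuousOn_slitPolarInv }
  exact Topology.IsEmbedding.subtypeVal.comp h.isEmbedding

theorem range_slitPolar : Set.range slitPolar = polarDomain :=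
  Set.Subset.antisymm (Set.range_subset_iff.mpr slitPolar_mem_polarDomain)
    fun w hw => ⟨slitPolarInv w, slitPolar_slitPolarInv hw⟩

end SlitPlane

section Cells

open Real

theorem exists_abs_sub_int_mul_two_pi_lt {x : ℝ} (hx : 0 < 1 + cos x) :
    ∃ k : ℤ, |x - k * (2 * π)| < π := by
  have habs : |toIocMod two_pi_pos (-π) x| ≤ π := by
    have := toIocMod_mem_Ioc two_pi_pos (-π) x
    rw [abs_le]
    constructor <;> linarith [this.1, this.2]
  have hmod : toIocMod two_pi_pos (-π) x = x - toIocDiv two_pi_pos (-π) x * (2 * π) := by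
    rw [← zsmul_eq_mul, self_sub_toIocDiv_zsmul]
  refine ⟨toIocDiv two_pi_pos (-π) x, hmod ▸ habs.lt_of_ne fun h => ?_⟩
  have hcos : cos |toIocMod two_pi_pos (-π) x| = cos x := by
    rw [cos_abs, hmod, cos_sub_int_mul_two_pi]
  rw [h, cos_pi] at hcos
  linarith

theorem units_cast_sq (ν : ℤˣ) : ((ν : ℤ) : ℝ) ^ 2 = 1 := by
  rcases Int.units_eq_one_or ν with rfl | rfl <;> simp

theorem exists_units_mul_pos {x : ℝ} (hx : x ≠ 0) : ∃ ν : ℤˣ, 0 < ν * x := by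
  rcases hx.lt_or_gt with h | h
  · exact ⟨-1, by simpa using h⟩
  · exact ⟨1, by simpa using h⟩

theorem units_eq_of_mul_pos {ν ν' : ℤˣ} {x : ℝ} (h : 0 < ν * x) (h' : 0 < ν' * x) : ν = ν' := by
  rcases Int.units_eq_one_or ν with rfl | rfl <;> rcases Int.units_eq_one_or ν' with rfl | rfl <;>
    simp_all [lt_asymm]

theorem units_mul_sin (ν : ℤˣ) (x : ℝ) : ν * sin x = cos (x - ν * (π / 2)) := by
  rcases Int.units_eq_one_or ν with rfl | rfl
  · simp [cos_sub_pi_div_two]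
  · simp [← cos_add_pi_div_two]

/-- The pairs of angles in `(-π, π)` whose difference lies in the `k`-th interval on which
`1 + ν * sin` is positive. -/
def angleCell (ν : ℤˣ) (k : ℤ) : Set (ℝ × ℝ) :=
  {(θ, φ) | |θ| < π ∧ |φ| < π ∧ |θ - φ - (ν * (π / 2) + k * (2 * π))| < π}

theorem one_add_units_mul_sin_pos {ν : ℤˣ} {k : ℤ} {θ φ : ℝ} (h : (θ, φ) ∈ angleCell ν k) :
    0 < 1 + ν * sin (θ - φ) := by
  rw [units_mul_sin, ← cos_sub_int_mul_two_pi _ k, sub_sub]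
  exact one_add_cos_pos h.2.2

theorem angleCell_eq (ν : ℤˣ) (k : ℤ) :
    angleCell ν k =
      LinearMap.fst ℝ ℝ ℝ ⁻¹' Metric.ball 0 π ∩ LinearMap.snd ℝ ℝ ℝ ⁻¹' Metric.ball 0 π ∩
      (LinearMap.fst ℝ ℝ ℝ - LinearMap.snd ℝ ℝ ℝ) ⁻¹'
        Metric.ball (ν * (π / 2) + k * (2 * π)) π := by
  ext ⟨θ, φ⟩
  simp only [angleCell, Set.mem_ofPred_eq, Set.mem_inter_iff, Set.mem_preimage, Metric.mem_ball,
    Real.dist_eq, sub_zero, LinearMap.sub_apply, LinearMap.fst_apply, LinearMap.snd_apply,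
    and_assoc]

theorem convex_angleCell (ν : ℤˣ) (k : ℤ) : Convex ℝ (angleCell ν k) := by
  rw [angleCell_eq]
  exact (((convex_ball _ _).linear_preimage _).inter ((convex_ball _ _).linear_preimage _)).inter
    ((convex_ball _ _).linear_preimage _)

theorem isOpen_angleCell (ν : ℤˣ) (k : ℤ) : IsOpen (angleCell ν k) := by
  rw [angleCell_eq]
  refine ((Metric.isOpen_ball.preimage ?_).inter (Metric.isOpen_ball.preimage ?_)).inter
    (Metric.isOpen_ball.preimage ?_)
  exacts [continuous_fst, continuous_snd, continuous_fst.sub continuous_snd]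

theorem angleCell_nonempty (ν : ℤˣ) {k : ℤ} (hk : k ∈ Set.Icc (-1) 1) :
    (angleCell ν k).Nonempty := by
  have hk₁ : |(k : ℝ)| ≤ 1 := by exact_mod_cast abs_le.mpr hk
  have hν : |((ν : ℤ) : ℝ)| = 1 := by rcases Int.units_eq_one_or ν with rfl | rfl <;> simp
  have hangle : |k * (7 / 8 * π)| < π := by
    rw [abs_mul, abs_of_pos (by positivity : 0 < 7 / 8 * π)]
    nlinarith [pi_pos]
  refine ⟨(k * (7 / 8 * π), -(k * (7 / 8 * π))), hangle, by rwa [abs_neg], ?_⟩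
  calc |k * (7 / 8 * π) - -(k * (7 / 8 * π)) - (ν * (π / 2) + k * (2 * π))|
      = |ν * (π / 2) + k * (π / 4)| := by rw [← abs_neg]; ring_nf
    _ ≤ |ν * (π / 2)| + |k * (π / 4)| := abs_add_le _ _
    _ = π / 2 + |(k : ℝ)| * (π / 4) := by
      rw [abs_mul, abs_mul, hν, one_mul, abs_of_pos pi_div_two_pos,
        abs_of_pos (by positivity : 0 < π / 4)]
    _ < π := by nlinarith [pi_pos]

theorem mem_Icc_of_mem_angleCell {ν : ℤˣ} {k : ℤ} {w : ℝ × ℝ} (hw : w ∈ angleCell ν k) :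
    k ∈ Set.Icc (-1) 1 := by
  obtain ⟨⟨hθ, hθ'⟩, ⟨hφ, hφ'⟩, ⟨hk, hk'⟩⟩ := And.imp abs_lt.mp (And.imp abs_lt.mp abs_lt.mp) hw
  have hν : |((ν : ℤ) : ℝ)| ≤ 1 := by rcases Int.units_eq_one_or ν with rfl | rfl <;> simp
  obtain ⟨hν, hν'⟩ := abs_le.mp hν
  have hlt : |(k : ℝ)| < 2 := abs_lt.mpr ⟨by nlinarith [pi_pos], by nlinarith [pi_pos]⟩
  have hlt' : |k| < 2 := by exact_mod_cast hlt
  exact ⟨by linarith [(abs_lt.mp hlt').1], by linarith [(abs_lt.mp hlt').2]⟩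

theorem eq_of_mem_angleCell {ν : ℤˣ} {k k' : ℤ} {w : ℝ × ℝ} (hk : w ∈ angleCell ν k)
    (hk' : w ∈ angleCell ν k') : k = k' := by
  have hlt : |((k - k' : ℤ) : ℝ)| * (2 * π) < 1 * (2 * π) := by
    calc |((k - k' : ℤ) : ℝ)| * (2 * π)
        = |(w.1 - w.2 - (ν * (π / 2) + k' * (2 * π))) -
            (w.1 - w.2 - (ν * (π / 2) + k * (2 * π)))| := by
          rw [← abs_of_pos two_pi_pos, ← abs_mul, abs_of_pos two_pi_pos]
          push_cast
          ring_nf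
      _ ≤ _ := abs_sub _ _
      _ < π + π := add_lt_add hk'.2.2 hk.2.2
      _ = 1 * (2 * π) := by ring
  have hlt' : |k - k'| < 1 := by exact_mod_cast lt_of_mul_lt_mul_right hlt two_pi_pos.le
  exact sub_eq_zero.mp (Int.abs_lt_one_iff.mp hlt')

theorem one_add_units_mul_sin_pos_of_pairings {η μ : ℤˣ} {K F θ φ : ℝ}
    (h₁ : 0 < η * (K * cos θ + F * sin θ)) (h₂ : 0 < μ * (F * cos φ - K * sin φ)) :
    0 < 1 + ((η * μ : ℤˣ) : ℝ) * sin (θ - φ) := by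
  have hη : ((η : ℤ) : ℝ) ^ 2 = 1 := units_cast_sq η
  have hμ : ((μ : ℤ) : ℝ) ^ 2 = 1 := units_cast_sq μ
  set X := η * cos θ - μ * sin φ
  set Y := η * sin θ + μ * cos φ
  have hnorm : X ^ 2 + Y ^ 2 = 2 * (1 + ((η * μ : ℤˣ) : ℝ) * sin (θ - φ)) := by
    rw [sin_sub]
    push_cast
    linear_combination η ^ 2 * sin_sq_add_cos_sq θ + μ ^ 2 * sin_sq_add_cos_sq φ + hη + hμ
  have hpos : 0 < K * X + F * Y := by linear_combination h₁ + h₂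
  have cauchySchwarz : (K * X + F * Y) ^ 2 ≤ (K ^ 2 + F ^ 2) * (X ^ 2 + Y ^ 2) := by
    linear_combination sq_nonneg (K * Y - F * X)
  have hprod : 0 < (K ^ 2 + F ^ 2) * (X ^ 2 + Y ^ 2) := (sq_pos_of_pos hpos).trans_le cauchySchwarz
  linarith [hnorm ▸ pos_of_mul_pos_right hprod (by positivity)]

/-- The index set of the cells: four signs and a winding number. -/
abbrev CellIndex := ℤˣ × ℤˣ × ℤˣ × ℤˣ × Set.Icc (-1 : ℤ) 1

/-- The space of the coordinates `((g, E, K, F), (l, D), (a, H))` on `BL 5 σ43521` and of their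
polar form `((g, E, K, F), (θ, s), (φ, t))`. -/
abbrev CellCoord := (ℝ × ℝ × ℝ × ℝ) × (ℝ × ℝ) × (ℝ × ℝ)

/-- The cell cut out by the signs of `g`, of `E` and of the two pairings of `(K, F)` with the
angles, and by the winding number `k` of the pair of angles. -/
def cell : CellIndex → Set CellCoord
  | (γ, ε, η, μ, k) => {((g, E, K, F), (θ, s), (φ, t)) |
      0 < γ * g ∧ 0 < ε * E ∧ 0 < η * (K * cos θ + F * sin θ) ∧ 0 < μ * (F * cos φ - K * sin φ) ∧
        s * sin θ < 1 ∧ t * sin φ < 1 ∧ (θ, φ) ∈ angleCell (η * μ) k}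

theorem isOpen_cell (i : CellIndex) : IsOpen (cell i) := by
  obtain ⟨γ, ε, η, μ, k⟩ := i
  refine .and (isOpen_lt ?_ ?_) (.and (isOpen_lt ?_ ?_) (.and (isOpen_lt ?_ ?_)
    (.and (isOpen_lt ?_ ?_) (.and (isOpen_lt ?_ ?_) (.and (isOpen_lt ?_ ?_)
    ((isOpen_angleCell _ _).preimage ?_)))))) <;> fun_prop

theorem pairwise_disjoint_cell : Pairwise (Function.onFun Disjoint cell) := by
  rintro ⟨γ, ε, η, μ, k⟩ ⟨γ', ε', η', μ', k'⟩ hne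
  refine Set.disjoint_left.mpr ?_
  rintro ⟨⟨g, E, K, F⟩, ⟨θ, s⟩, φ, t⟩ ⟨hγ, hε, hη, hμ, -, -, hk⟩ ⟨hγ', hε', hη', hμ', -, -, hk'⟩
  obtain rfl := units_eq_of_mul_pos hγ hγ'
  obtain rfl := units_eq_of_mul_pos hε hε'
  obtain rfl := units_eq_of_mul_pos hη hη'
  obtain rfl := units_eq_of_mul_pos hμ hμ'
  exact hne (by rw [Subtype.ext (eq_of_mem_angleCell hk hk')])

/-- The union of the cells. -/
def cellDomain : Set CellCoord :=
  {((g, E, K, F), (θ, s), (φ, t)) | (θ, s) ∈ polarDomain ∧ (φ, t) ∈ polarDomain ∧ g ≠ 0 ∧ E ≠ 0 ∧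
    K * cos θ + F * sin θ ≠ 0 ∧ F * cos φ - K * sin φ ≠ 0}

theorem iUnion_cell : ⋃ i, cell i = cellDomain := by
  ext ⟨⟨g, E, K, F⟩, ⟨θ, s⟩, φ, t⟩
  constructor
  · rintro ⟨-, ⟨⟨γ, ε, η, μ, k⟩, rfl⟩, hγ, hε, hη, hμ, hs, ht, hθ, hφ, -⟩
    exact ⟨⟨hθ, hs⟩, ⟨hφ, ht⟩, right_ne_zero_of_mul hγ.ne', right_ne_zero_of_mul hε.ne',
      right_ne_zero_of_mul hη.ne', right_ne_zero_of_mul hμ.ne'⟩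
  · rintro ⟨⟨hθ, hs⟩, ⟨hφ, ht⟩, hg, hE, hq₁, hq₂⟩
    obtain ⟨γ, hγ⟩ := exists_units_mul_pos hg
    obtain ⟨ε, hε⟩ := exists_units_mul_pos hE
    obtain ⟨η, hη⟩ := exists_units_mul_pos hq₁
    obtain ⟨μ, hμ⟩ := exists_units_mul_pos hq₂
    have hpos := one_add_units_mul_sin_pos_of_pairings hη hμ
    rw [units_mul_sin] at hpos
    obtain ⟨k, hk⟩ := exists_abs_sub_int_mul_two_pi_lt hpos
    have hmem : (θ, φ) ∈ angleCell (η * μ) k := ⟨hθ, hφ, by rwa [← sub_sub]⟩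
    exact Set.mem_iUnion.mpr ⟨(γ, ε, η, μ, ⟨k, mem_Icc_of_mem_angleCell hmem⟩),
      hγ, hε, hη, hμ, hs, ht, hmem⟩

theorem segment_subset_cell {i : CellIndex} {x x' : ℝ × ℝ × ℝ × ℝ} {θ s s' φ t t' : ℝ}
    (h : (x, (θ, s), (φ, t)) ∈ cell i) (h' : (x', (θ, s'), (φ, t')) ∈ cell i) :
    segment ℝ (x, (θ, s), (φ, t)) (x', (θ, s'), (φ, t')) ⊆ cell i := by
  obtain ⟨γ, ε, η, μ, k⟩ := i
  obtain ⟨g, E, K, F⟩ := x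
  obtain ⟨g', E', K', F'⟩ := x'
  obtain ⟨hγ, hε, hη, hμ, hs, ht, hangle⟩ := h
  obtain ⟨hγ', hε', hη', hμ', hs', ht', -⟩ := h'
  rintro _ ⟨a, b, ha, hb, hab, rfl⟩
  have hθ : a * θ + b * θ = θ := by rw [← add_mul, hab, one_mul]
  have hφ : a * φ + b * φ = φ := by rw [← add_mul, hab, one_mul]
  have pos {u v : ℝ} (hu : 0 < u) (hv : 0 < v) : 0 < a * u + b * v :=
    convex_Ioi (0 : ℝ) hu hv ha hb hab
  have lt_one {u v : ℝ} (hu : u < 1) (hv : v < 1) : a * u + b * v < 1 :=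
    convex_Iio (1 : ℝ) hu hv ha hb hab
  simp only [Prod.smul_mk, Prod.mk_add_mk, smul_eq_mul, hθ, hφ]
  exact ⟨by linear_combination pos hγ hγ', by linear_combination pos hε hε',
    by linear_combination pos hη hη', by linear_combination pos hμ hμ',
    by linear_combination lt_one hs hs', by linear_combination lt_one ht ht', hangle⟩

/-- A section of the projection of a cell onto its angles: `(K, F)` is the sum of the two unit
vectors with which it has to pair positively. -/
noncomputable def cellSection (γ ε η μ : ℤˣ) : ℝ × ℝ → CellCoord
  | (θ, φ) => ((γ, ε, η * cos θ - μ * sin φ, η * sin θ + μ * cos φ), (θ, 0), (φ, 0))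

theorem continuous_cellSection (γ ε η μ : ℤˣ) : Continuous (cellSection γ ε η μ) := by
  unfold cellSection
  fun_prop

theorem cellSection_mem_cell {γ ε η μ : ℤˣ} {k : Set.Icc (-1 : ℤ) 1} {w : ℝ × ℝ}
    (hw : w ∈ angleCell (η * μ) k) : cellSection γ ε η μ w ∈ cell (γ, ε, η, μ, k) := by
  obtain ⟨θ, φ⟩ := w
  have hpos := one_add_units_mul_sin_pos hw
  rw [sin_sub] at hpos
  push_cast at hpos
  refine ⟨?_, ?_, ?_, ?_, by simp, by simp, hw⟩
  · linear_combination -units_cast_sq γ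
  · linear_combination -units_cast_sq ε
  · linear_combination hpos - units_cast_sq η - η ^ 2 * sin_sq_add_cos_sq θ
  · linear_combination hpos - units_cast_sq μ - μ ^ 2 * sin_sq_add_cos_sq φ

theorem contractibleSpace_cell (i : CellIndex) : ContractibleSpace (cell i) := by
  obtain ⟨γ, ε, η, μ, k⟩ := i
  have : ContractibleSpace (angleCell (η * μ) k) :=
    (convex_angleCell _ _).contractibleSpace (angleCell_nonempty _ k.2)
  exact contractibleSpace_of_segment_subset (p := fun y => (y.2.1.1, y.2.2.1)) (by fun_prop)
    (fun y hy => hy.2.2.2.2.2.2) (continuous_cellSection γ ε η μ).continuousOn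
    (fun w hw => cellSection_mem_cell hw)
    fun y hy => segment_subset_cell hy (cellSection_mem_cell hy.2.2.2.2.2.2)

end Cells

section BruhatCell

variable {m : ℕ}

theorem mem_UpInv_iff {U : Matrix (Fin m) (Fin m) ℝ} :
    U ∈ UpInv m ↔ (∀ i j, j < i → U i j = 0) ∧ ∀ i, U i i ≠ 0 :=
  and_congr_right fun hU => by
    rw [det_of_isUpperTriangular fun i j h => hU i j h, isUnit_iff_ne_zero,
      Finset.prod_ne_zero_iff]
    simp only [Finset.mem_univ, forall_const]

theorem inv_mem_UpInv {U : Matrix (Fin m) (Fin m) ℝ} (hU : U ∈ UpInv m) : U⁻¹ ∈ UpInv m := by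
  have := U.invertibleOfIsUnitDet hU.2
  exact ⟨fun i j h => Matrix.blockTriangular_inv_of_blockTriangular (fun i j h => hU.1 i j h) h,
    U.isUnit_nonsing_inv_det hU.2⟩

theorem permMat_mul_apply (σ : Equiv.Perm (Fin m)) (V : Matrix (Fin m) (Fin m) ℝ) (i j : Fin m) :
    (permMat m σ * V) i j = V (σ i) j := by
  simp [permMat, mul_apply]

/-- Row `i` of `M` can be combined with lower rows so as to have its leading entry in column
`j`. -/
def HasPivot (M : Matrix (Fin m) (Fin m) ℝ) (i j : Fin m) : Prop :=
  ∃ t : Fin m → ℝ, (∀ k < i, t k = 0) ∧ t i ≠ 0 ∧ (∀ l < j, (t ᵥ* M) l = 0) ∧ (t ᵥ* M) j ≠ 0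

theorem mem_Bru_iff_hasPivot {σ : Equiv.Perm (Fin m)} {M : Matrix (Fin m) (Fin m) ℝ} :
    M ∈ Bru m σ ↔ ∀ i, HasPivot M i (σ i) := by
  constructor
  · rintro ⟨U, hU, V, hV, rfl⟩ i
    have hT := mem_UpInv_iff.mp (inv_mem_UpInv hU)
    rw [mem_UpInv_iff] at hV
    have hrow (j : Fin m) : (U⁻¹.row i ᵥ* (U * permMat m σ * V)) j = V (σ i) j := by
      change (U⁻¹ * (U * permMat m σ * V)) i j = _
      rw [Matrix.mul_assoc, nonsing_inv_mul_cancel_left _ _ hU.2, permMat_mul_apply]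
    exact ⟨U⁻¹.row i, hT.1 i, hT.2 i, fun j hj => (hrow j).trans (hV.1 _ j hj),
      (hrow (σ i)).trans_ne (hV.2 _)⟩
  · intro h
    choose T hzero hdiag hcol hpivot using h
    have hT : of T ∈ UpInv m := mem_UpInv_iff.mpr ⟨fun i j h => hzero i j h, hdiag⟩
    let V : Matrix (Fin m) (Fin m) ℝ := of fun i => T (σ.symm i) ᵥ* M
    have hV : V ∈ UpInv m := mem_UpInv_iff.mpr
      ⟨fun i j hij => hcol _ j (by simpa using hij), fun i => by simpa [V] using hpivot (σ.symm i)⟩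
    have hfactor : permMat m σ * V = of T * M := by
      ext i j
      simp only [permMat_mul_apply, V, of_apply, σ.symm_apply_apply]
      rfl
    exact ⟨_, inv_mem_UpInv hT, V, hV, by
      rw [Matrix.mul_assoc, hfactor, nonsing_inv_mul_cancel_left _ _ hT.2]⟩

theorem ext_of_mem_Lo1 {L M : Matrix (Fin m) (Fin m) ℝ} (hL : L ∈ Lo1 m) (hM : M ∈ Lo1 m)
    (h : ∀ i j, j < i → L i j = M i j) : L = M := by
  ext i j
  rcases lt_trichotomy i j with hij | rfl | hij
  · rw [hL.2 i j hij, hM.2 i j hij]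
  · rw [hL.1, hM.1]
  · exact h i j hij

theorem vecMul_of_mem_Lo1 {L : Matrix (Fin 5) (Fin 5) ℝ} (hL : L ∈ Lo1 5) (t : Fin 5 → ℝ) :
    t ᵥ* L = ![t 0 + t 1 * L 1 0 + t 2 * L 2 0 + t 3 * L 3 0 + t 4 * L 4 0,
      t 1 + t 2 * L 2 1 + t 3 * L 3 1 + t 4 * L 4 1, t 2 + t 3 * L 3 2 + t 4 * L 4 2,
      t 3 + t 4 * L 4 3, t 4] := by
  ext j
  fin_cases j <;> simp [vecMul, dotProduct, Fin.sum_univ_five, hL.1, hL.2]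

variable {L : Matrix (Fin 5) (Fin 5) ℝ}

theorem hasPivot_four_zero_iff (hL : L ∈ Lo1 5) : HasPivot L 4 0 ↔ L 4 0 ≠ 0 := by
  simp only [HasPivot, vecMul_of_mem_Lo1 hL]
  constructor
  · rintro ⟨t, ht, -, -, hpivot⟩
    have hpivot : t 4 * L 4 0 ≠ 0 := by simpa [ht] using hpivot
    exact right_ne_zero_of_mul hpivot
  · intro h
    exact ⟨![0, 0, 0, 0, 1], by simp [Fin.forall_fin_succ], by simp, by simp, by simpa⟩

theorem hasPivot_three_one_iff (hL : L ∈ Lo1 5) (h40 : L 4 0 ≠ 0) :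
    HasPivot L 3 1 ↔ L 3 1 * L 4 0 - L 3 0 * L 4 1 ≠ 0 := by
  simp only [HasPivot, vecMul_of_mem_Lo1 hL]
  constructor
  · rintro ⟨t, ht, -, hcol, hpivot⟩ hminor
    have hcol : t 3 * L 3 0 + t 4 * L 4 0 = 0 := by simpa [ht] using hcol 0
    have hpivot : t 3 * L 3 1 + t 4 * L 4 1 ≠ 0 := by simpa [ht] using hpivot
    refine mul_ne_zero h40 hpivot ?_
    linear_combination t 3 * hminor + L 4 1 * hcol
  · intro h
    refine ⟨![0, 0, 0, L 4 0, -L 3 0], by simp [Fin.forall_fin_succ], by simpa, ?_, ?_⟩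
    · simp [mul_comm]
    · suffices L 4 0 * L 3 1 - L 3 0 * L 4 1 ≠ 0 by simpa [← sub_eq_add_neg]
      rwa [mul_comm (L 4 0)]

theorem hasPivot_two_four_iff (hL : L ∈ Lo1 5) :
    HasPivot L 2 4 ↔ L 4 2 - L 4 3 * L 3 2 ≠ 0 ∧
      (L 4 2 - L 4 3 * L 3 2) * L 2 0 = L 4 0 - L 4 3 * L 3 0 ∧
      (L 4 2 - L 4 3 * L 3 2) * L 2 1 = L 4 1 - L 4 3 * L 3 1 := by
  simp only [HasPivot, vecMul_of_mem_Lo1 hL]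
  constructor
  · rintro ⟨t, ht, hdiag, hcol, hpivot⟩
    have hcol₀ : t 2 * L 2 0 + t 3 * L 3 0 + t 4 * L 4 0 = 0 := by simpa [ht] using hcol 0
    have hcol₁ : t 2 * L 2 1 + t 3 * L 3 1 + t 4 * L 4 1 = 0 := by simpa [ht] using hcol 1
    have hcol₂ : t 2 + t 3 * L 3 2 + t 4 * L 4 2 = 0 := by simpa [ht] using hcol 2
    have hcol₃ : t 3 + t 4 * L 4 3 = 0 := by simpa [ht] using hcol 3
    have hpivot : t 4 ≠ 0 := by simpa using hpivot
    refine ⟨fun h => hdiag ?_, mul_left_cancel₀ hpivot ?_, mul_left_cancel₀ hpivot ?_⟩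
    · linear_combination hcol₂ - L 3 2 * hcol₃ - t 4 * h
    · linear_combination L 2 0 * hcol₂ - L 2 0 * L 3 2 * hcol₃ - hcol₀ + L 3 0 * hcol₃
    · linear_combination L 2 1 * hcol₂ - L 2 1 * L 3 2 * hcol₃ - hcol₁ + L 3 1 * hcol₃
  · rintro ⟨hn, h₀, h₁⟩
    refine ⟨![0, 0, L 4 2 - L 4 3 * L 3 2, L 4 3, -1], by simp [Fin.forall_fin_succ], by simpa,
      ?_, by simp⟩
    suffices (L 4 2 - L 4 3 * L 3 2) * L 2 0 + L 4 3 * L 3 0 - L 4 0 = 0 ∧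
        (L 4 2 - L 4 3 * L 3 2) * L 2 1 + L 4 3 * L 3 1 - L 4 1 = 0 by
      simpa [Fin.forall_fin_succ, ← sub_eq_add_neg]
    exact ⟨by linear_combination h₀, by linear_combination h₁⟩

theorem hasPivot_zero_three (hL : L ∈ Lo1 5) (hn : L 4 2 - L 4 3 * L 3 2 ≠ 0)
    (h : L 1 0 * (L 3 1 * L 4 2 - L 3 2 * L 4 1) - (L 3 0 * L 4 2 - L 3 2 * L 4 0) ≠ 0) :
    HasPivot L 0 3 := by
  simp only [HasPivot, vecMul_of_mem_Lo1 hL]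
  refine ⟨![L 1 0 * (L 3 1 * L 4 2 - L 3 2 * L 4 1) - (L 3 0 * L 4 2 - L 3 2 * L 4 0),
    -(L 3 1 * L 4 2 - L 3 2 * L 4 1), 0, L 4 2, -L 3 2], by simp, h, ?_, ?_⟩
  · intro l hl
    fin_cases l
    · change L 1 0 * (L 3 1 * L 4 2 - L 3 2 * L 4 1) - (L 3 0 * L 4 2 - L 3 2 * L 4 0) +
        -(L 3 1 * L 4 2 - L 3 2 * L 4 1) * L 1 0 + 0 * L 2 0 + L 4 2 * L 3 0 + -L 3 2 * L 4 0 = 0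
      ring
    · change -(L 3 1 * L 4 2 - L 3 2 * L 4 1) + 0 * L 2 1 + L 4 2 * L 3 1 + -L 3 2 * L 4 1 = 0
      ring
    · change 0 + L 4 2 * L 3 2 + -L 3 2 * L 4 2 = 0
      ring
    all_goals cases hl.not_ge (by decide)
  · simpa [mul_comm, ← sub_eq_add_neg] using hn

theorem hasPivot_one_two_iff (hL : L ∈ Lo1 5) (hm : L 3 1 * L 4 0 - L 3 0 * L 4 1 ≠ 0)
    (hn : L 4 2 - L 4 3 * L 3 2 ≠ 0)
    (h₀ : (L 4 2 - L 4 3 * L 3 2) * L 2 0 = L 4 0 - L 4 3 * L 3 0)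
    (h₁ : (L 4 2 - L 4 3 * L 3 2) * L 2 1 = L 4 1 - L 4 3 * L 3 1) :
    HasPivot L 1 2 ↔
      L 1 0 * (L 3 1 * L 4 2 - L 3 2 * L 4 1) - (L 3 0 * L 4 2 - L 3 2 * L 4 0) ≠ 0 := by
  simp only [HasPivot, vecMul_of_mem_Lo1 hL]
  constructor
  · rintro ⟨t, ht, -, hcol, hpivot⟩ hminor
    have hcol₀ : t 1 * L 1 0 + t 2 * L 2 0 + t 3 * L 3 0 + t 4 * L 4 0 = 0 := by
      simpa [ht] using hcol 0
    have hcol₁ : t 1 + t 2 * L 2 1 + t 3 * L 3 1 + t 4 * L 4 1 = 0 := by simpa [ht] using hcol 1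
    have hpivot : t 2 + t 3 * L 3 2 + t 4 * L 4 2 ≠ 0 := by simpa [ht] using hpivot
    refine mul_ne_zero (mul_ne_zero hn hm) hpivot ?_
    linear_combination (L 3 1 * L 4 2 - L 3 2 * L 4 1) *
        ((L 4 2 - L 4 3 * L 3 2) * hcol₀ - t 2 * h₀) -
      (L 3 0 * L 4 2 - L 3 2 * L 4 0) * ((L 4 2 - L 4 3 * L 3 2) * hcol₁ - t 2 * h₁) -
      (L 4 2 - L 4 3 * L 3 2) * t 1 * hminor
  · intro h
    refine ⟨![0, L 3 1 * L 4 0 - L 3 0 * L 4 1, 0, L 1 0 * L 4 1 - L 4 0, L 3 0 - L 1 0 * L 3 1],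
      by simp, hm, ?_, ?_⟩
    · intro l hl
      fin_cases l
      · change 0 + (L 3 1 * L 4 0 - L 3 0 * L 4 1) * L 1 0 + 0 * L 2 0 +
          (L 1 0 * L 4 1 - L 4 0) * L 3 0 + (L 3 0 - L 1 0 * L 3 1) * L 4 0 = 0
        ring
      · change L 3 1 * L 4 0 - L 3 0 * L 4 1 + 0 * L 2 1 + (L 1 0 * L 4 1 - L 4 0) * L 3 1 +
          (L 3 0 - L 1 0 * L 3 1) * L 4 1 = 0
        ring
      all_goals cases hl.not_ge (by decide)
    · suffices (L 1 0 * L 4 1 - L 4 0) * L 3 2 + (L 3 0 - L 1 0 * L 3 1) * L 4 2 ≠ 0 by simpa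
      refine fun hzero => h ?_
      linear_combination -hzero

theorem mem_BL_iff :
    L ∈ BL 5 σ43521 ↔ L ∈ Lo1 5 ∧ L 4 0 ≠ 0 ∧ L 3 1 * L 4 0 - L 3 0 * L 4 1 ≠ 0 ∧
      L 1 0 * (L 3 1 * L 4 2 - L 3 2 * L 4 1) - (L 3 0 * L 4 2 - L 3 2 * L 4 0) ≠ 0 ∧
      L 4 2 - L 4 3 * L 3 2 ≠ 0 ∧
      (L 4 2 - L 4 3 * L 3 2) * L 2 0 = L 4 0 - L 4 3 * L 3 0 ∧
      (L 4 2 - L 4 3 * L 3 2) * L 2 1 = L 4 1 - L 4 3 * L 3 1 := by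
  refine and_congr_right fun hL => ?_
  have hpivots : L ∈ Bru 5 σ43521 ↔ HasPivot L 0 3 ∧ HasPivot L 1 2 ∧ HasPivot L 2 4 ∧
      HasPivot L 3 1 ∧ HasPivot L 4 0 := by
    rw [mem_Bru_iff_hasPivot]
    simp [Fin.forall_fin_succ, σ43521]
  rw [hpivots, hasPivot_two_four_iff hL, hasPivot_four_zero_iff hL]
  constructor
  · rintro ⟨-, h₁, ⟨hn, h₂₀, h₂₁⟩, h₃, h₄⟩
    have hm := (hasPivot_three_one_iff hL h₄).mp h₃
    exact ⟨h₄, hm, (hasPivot_one_two_iff hL hm hn h₂₀ h₂₁).mp h₁, hn, h₂₀, h₂₁⟩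
  · rintro ⟨h₄, hm, h₁, hn, h₂₀, h₂₁⟩
    exact ⟨hasPivot_zero_three hL hn h₁, (hasPivot_one_two_iff hL hm hn h₂₀ h₂₁).mpr h₁,
      ⟨hn, h₂₀, h₂₁⟩, (hasPivot_three_one_iff hL h₄).mpr hm, h₄⟩

end BruhatCell

section Coordinates

/-- The coordinates `((g, E, K, F), (l, D), (a, H))` on `BL 5 σ43521` read off from normalized
minors of `L`. -/
noncomputable def minorCoord (L : Matrix (Fin 5) (Fin 5) ℝ) : CellCoord :=
  let E := (L 3 1 * L 4 0 - L 3 0 * L 4 1) / L 4 0 ^ 2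
  ((L 4 0, E, L 4 2 / L 4 0, (L 3 2 * L 4 0 - L 3 0 * L 4 2) / L 4 0 ^ 2),
    (L 4 3, L 3 0 / L 4 0), (L 1 0 * E, L 4 1 / (L 4 0 * E)))

/-- The matrix with given `minorCoord`. -/
noncomputable def matrixOfCoord : CellCoord → Matrix (Fin 5) (Fin 5) ℝ
  | ((g, E, K, F), (l, D), (a, H)) =>
    let q := K * (1 - l * D) - F * l
    !![1, 0, 0, 0, 0;
      a / E, 1, 0, 0, 0;
      (1 - l * D) / q, E * (H - l * (1 + D * H)) / q, 1, 0, 0;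
      g * D, g * E * (1 + D * H), g * (F + D * K), 1, 0;
      g, g * E * H, g * K, l, 1]

/-- The range of `minorCoord` on `BL 5 σ43521`. -/
def coordDomain : Set CellCoord :=
  {((g, E, K, F), (l, D), (a, H)) | 
    K * (1 - l * D) - F * l ≠ 0 ∧ F * (1 - a * H) + K * a ≠ 0 ∧ g ≠ 0 ∧ E ≠ 0}

theorem matrixOfCoord_mem_Lo1 (w : CellCoord) : matrixOfCoord w ∈ Lo1 5 :=
  ⟨by simp [Fin.forall_fin_succ, matrixOfCoord], by simp [Fin.forall_fin_succ, matrixOfCoord]⟩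

theorem matrixOfCoord_mem_BL {w : CellCoord} (hw : w ∈ coordDomain) :
    matrixOfCoord w ∈ BL 5 σ43521 := by
  refine mem_BL_iff.mpr ⟨matrixOfCoord_mem_Lo1 w, ?_⟩
  obtain ⟨⟨g, E, K, F⟩, ⟨l, D⟩, a, H⟩ := w
  obtain ⟨hq, hr, hg, hE⟩ := hw
  have minor₃₁ : g * E * (1 + D * H) * g - g * D * (g * E * H) = g ^ 2 * E := by ring
  have minor₁₂ : a / E * (g * E * (1 + D * H) * (g * K) - g * (F + D * K) * (g * E * H)) -
      (g * D * (g * K) - g * (F + D * K) * g) = g ^ 2 * (F * (1 - a * H) + K * a) := by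
    field_simp
    ring
  have minor₂₄ : g * K - l * (g * (F + D * K)) = g * (K * (1 - l * D) - F * l) := by ring
  change g ≠ 0 ∧ g * E * (1 + D * H) * g - g * D * (g * E * H) ≠ 0 ∧
    a / E * (g * E * (1 + D * H) * (g * K) - g * (F + D * K) * (g * E * H)) -
      (g * D * (g * K) - g * (F + D * K) * g) ≠ 0 ∧
    g * K - l * (g * (F + D * K)) ≠ 0 ∧
    (g * K - l * (g * (F + D * K))) * ((1 - l * D) / (K * (1 - l * D) - F * l)) =
      g - l * (g * D) ∧
    (g * K - l * (g * (F + D * K))) *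
      (E * (H - l * (1 + D * H)) / (K * (1 - l * D) - F * l)) =
      g * E * H - l * (g * E * (1 + D * H))
  rw [minor₃₁, minor₁₂, minor₂₄, mul_assoc g, mul_assoc g, mul_div_cancel₀ _ hq,
    mul_div_cancel₀ _ hq]
  exact ⟨hg, by positivity, by positivity, by positivity, by ring, by ring⟩

theorem minorCoord_matrixOfCoord {w : CellCoord} (hw : w ∈ coordDomain) :
    minorCoord (matrixOfCoord w) = w := by
  obtain ⟨⟨g, E, K, F⟩, ⟨l, D⟩, a, H⟩ := w
  obtain ⟨-, -, hg, hE⟩ := hw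
  have hminor : (g * E * (1 + D * H) * g - g * D * (g * E * H)) / g ^ 2 = E := by
    field_simp
    ring
  change ((g, (g * E * (1 + D * H) * g - g * D * (g * E * H)) / g ^ 2, g * K / g,
      (g * (F + D * K) * g - g * D * (g * K)) / g ^ 2), (l, g * D / g),
    (a / E * ((g * E * (1 + D * H) * g - g * D * (g * E * H)) / g ^ 2),
      g * E * H / (g * ((g * E * (1 + D * H) * g - g * D * (g * E * H)) / g ^ 2)))) = _
  rw [hminor]
  congr! 4
  all_goals field_simp
  ring

variable {L : Matrix (Fin 5) (Fin 5) ℝ}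

theorem pairing_minorCoord_fst (hg : L 4 0 ≠ 0) :
    L 4 2 / L 4 0 * (1 - L 4 3 * (L 3 0 / L 4 0)) -
        (L 3 2 * L 4 0 - L 3 0 * L 4 2) / L 4 0 ^ 2 * L 4 3 =
      (L 4 2 - L 4 3 * L 3 2) / L 4 0 := by
  field_simp
  ring

theorem pairing_minorCoord_snd (hg : L 4 0 ≠ 0) {E : ℝ} (hE : E ≠ 0)
    (hm : E = (L 3 1 * L 4 0 - L 3 0 * L 4 1) / L 4 0 ^ 2) :
    (L 3 2 * L 4 0 - L 3 0 * L 4 2) / L 4 0 ^ 2 * (1 - L 1 0 * E * (L 4 1 / (L 4 0 * E))) +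
        L 4 2 / L 4 0 * (L 1 0 * E) =
      (L 1 0 * (L 3 1 * L 4 2 - L 3 2 * L 4 1) - (L 3 0 * L 4 2 - L 3 2 * L 4 0)) / L 4 0 ^ 2 := by
  rw [eq_div_iff (by positivity)] at hm
  field_simp
  linear_combination L 1 0 * L 4 2 * hm

theorem minorCoord_mem_coordDomain (hL : L ∈ BL 5 σ43521) : minorCoord L ∈ coordDomain := by
  obtain ⟨-, hg, hm, hr, hq, -, -⟩ := mem_BL_iff.mp hL
  have hE := div_ne_zero hm (pow_ne_zero 2 hg)
  exact ⟨(pairing_minorCoord_fst hg).trans_ne (div_ne_zero hq hg),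
    (pairing_minorCoord_snd hg hE rfl).trans_ne (div_ne_zero hr (pow_ne_zero 2 hg)), hg, hE⟩

theorem matrixOfCoord_minorCoord (hL : L ∈ BL 5 σ43521) : matrixOfCoord (minorCoord L) = L := by
  obtain ⟨hLo1, hg, -, -, hq, h₀, h₁⟩ := mem_BL_iff.mp hL
  set E := (minorCoord L).1.2.1 with hm
  have hE : E ≠ 0 := (minorCoord_mem_coordDomain hL).2.2.2
  simp only [minorCoord] at hm
  rw [eq_div_iff (by positivity)] at hm
  have hEH : L 4 0 * E * (L 4 1 / (L 4 0 * E)) = L 4 1 := mul_div_cancel₀ _ (mul_ne_zero hg hE)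
  have hEDH : L 4 0 * E * (1 + L 3 0 / L 4 0 * (L 4 1 / (L 4 0 * E))) = L 3 1 := by
    field_simp
    linear_combination hm
  have entry₁₀ : matrixOfCoord (minorCoord L) 1 0 = L 1 0 := mul_div_cancel_right₀ _ hE
  have entry₂₀ : matrixOfCoord (minorCoord L) 2 0 = L 2 0 := by
    change (1 - L 4 3 * (L 3 0 / L 4 0)) / _ = _
    rw [pairing_minorCoord_fst hg]
    field_simp
    linear_combination -h₀
  have entry₂₁ : matrixOfCoord (minorCoord L) 2 1 = L 2 1 := by
    change E * (L 4 1 / (L 4 0 * E) -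
      L 4 3 * (1 + L 3 0 / L 4 0 * (L 4 1 / (L 4 0 * E)))) / _ = _
    rw [pairing_minorCoord_fst hg, div_div_eq_mul_div, div_eq_iff hq]
    linear_combination hEH - L 4 3 * hEDH - h₁
  have entry₃₀ : matrixOfCoord (minorCoord L) 3 0 = L 3 0 := mul_div_cancel₀ _ hg
  have entry₃₂ : matrixOfCoord (minorCoord L) 3 2 = L 3 2 := by
    change L 4 0 * ((L 3 2 * L 4 0 - L 3 0 * L 4 2) / L 4 0 ^ 2 +
      L 3 0 / L 4 0 * (L 4 2 / L 4 0)) = _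
    field_simp
    ring
  have entry₄₂ : matrixOfCoord (minorCoord L) 4 2 = L 4 2 := mul_div_cancel₀ _ hg
  refine ext_of_mem_Lo1 (matrixOfCoord_mem_Lo1 _) hLo1 fun i j hij => ?_
  fin_cases i <;> fin_cases j <;> first | assumption | rfl | cases hij.not_ge (by decide)

theorem continuousOn_minorCoord : ContinuousOn minorCoord (BL 5 σ43521) := by
  have hg : ∀ L ∈ BL 5 σ43521, L 4 0 ≠ 0 := fun L hL => (mem_BL_iff.mp hL).2.1
  have hg₂ : ∀ L ∈ BL 5 σ43521, L 4 0 ^ 2 ≠ 0 := fun L hL => pow_ne_zero 2 (hg L hL)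
  have entry (i j : Fin 5) :
      ContinuousOn (fun L : Matrix (Fin 5) (Fin 5) ℝ => L i j) (BL 5 σ43521) := by
    fun_prop
  have minor (i j k l : Fin 5) : ContinuousOn
      (fun L : Matrix (Fin 5) (Fin 5) ℝ => (L i j * L k l - L i l * L k j) / L 4 0 ^ 2)
      (BL 5 σ43521) := by
    fun_prop (disch := assumption)
  have hE := minor 3 1 4 0
  exact .prodMk
    ((entry 4 0).prodMk (hE.prodMk (((entry 4 2).div (entry 4 0) hg).prodMk (minor 3 2 4 0))))
    (((entry 4 3).prodMk ((entry 3 0).div (entry 4 0) hg)).prodMk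
      (((entry 1 0).mul hE).prodMk ((entry 4 1).div ((entry 4 0).mul hE) fun L hL =>
        mul_ne_zero (hg L hL) (minorCoord_mem_coordDomain hL).2.2.2)))

theorem continuousOn_matrixOfCoord : ContinuousOn matrixOfCoord coordDomain := by
  have hq : ∀ w ∈ coordDomain, w.1.2.2.1 * (1 - w.2.1.1 * w.2.1.2) - w.1.2.2.2 * w.2.1.1 ≠ 0 :=
    fun w hw => hw.1
  have hE : ∀ w ∈ coordDomain, w.1.2.1 ≠ 0 := fun w hw => hw.2.2.2
  refine continuousOn_pi.mpr fun i => continuousOn_pi.mpr fun j => ?_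
  fin_cases i <;> fin_cases j <;>
    simp only [matrixOfCoord, Fin.zero_eta, Fin.mk_one, Fin.reduceFinMk, of_apply, cons_val] <;>
    fun_prop (disch := assumption)

theorem isEmbedding_minorCoord :
    Topology.IsEmbedding fun L : BL 5 σ43521 => minorCoord L := by
  let h : BL 5 σ43521 ≃ₜ coordDomain :=
    { toFun := fun L => ⟨minorCoord L, minorCoord_mem_coordDomain L.2⟩
      invFun := fun w => ⟨matrixOfCoord w, matrixOfCoord_mem_BL w.2⟩
      left_inv := fun L => Subtype.ext (matrixOfCoord_minorCoord L.2)
      right_inv := fun w => Subtype.ext (minorCoord_matrixOfCoord w.2)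
      continuous_toFun :=
        (continuousOn_iff_continuous_domRestrict.mp continuousOn_minorCoord).subtype_mk _
      continuous_invFun :=
        (continuousOn_iff_continuous_domRestrict.mp continuousOn_matrixOfCoord).subtype_mk _ }
  exact Topology.IsEmbedding.subtypeVal.comp h.isEmbedding

theorem range_minorCoord : Set.range (fun L : BL 5 σ43521 => minorCoord L) = coordDomain :=
  Set.Subset.antisymm (Set.range_subset_iff.mpr fun L => minorCoord_mem_coordDomain L.2)
    fun w hw => ⟨⟨matrixOfCoord w, matrixOfCoord_mem_BL hw⟩, minorCoord_matrixOfCoord hw⟩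

/-- The passage from `((g, E, K, F), (l, D), (a, H))` to `((g, E, K, F), (θ, s), (φ, t))`. -/
noncomputable def polarize : CellCoord → CellCoord :=
  Prod.map id (Prod.map slitPolar slitPolar)

theorem isEmbedding_polarize : Topology.IsEmbedding polarize :=
  .prodMap .id (.prodMap isEmbedding_slitPolar isEmbedding_slitPolar)

theorem polarize_mem_cellDomain_iff {w : CellCoord} :
    polarize w ∈ cellDomain ↔ w ∈ coordDomain := by
  obtain ⟨⟨g, E, K, F⟩, v, u⟩ := w
  have hre (v : ℝ × ℝ) : _ = 1 - v.1 * v.2 := Complex.norm_mul_cos_arg (slitPoint v)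
  have him (v : ℝ × ℝ) : _ = -v.1 := Complex.norm_mul_sin_arg (slitPoint v)
  have hq : K * (1 - v.1 * v.2) - F * v.1 = ‖slitPoint v‖ *
      (K * Real.cos (slitPoint v).arg + F * Real.sin (slitPoint v).arg) := by
    linear_combination -K * hre v - F * him v
  have hr : F * (1 - u.1 * u.2) + K * u.1 = ‖slitPoint u‖ *
      (F * Real.cos (slitPoint u).arg - K * Real.sin (slitPoint u).arg) := by
    linear_combination -F * hre u + K * him u
  change slitPolar v ∈ polarDomain ∧ slitPolar u ∈ polarDomain ∧ g ≠ 0 ∧ E ≠ 0 ∧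
    K * Real.cos (slitPoint v).arg + F * Real.sin (slitPoint v).arg ≠ 0 ∧
    F * Real.cos (slitPoint u).arg - K * Real.sin (slitPoint u).arg ≠ 0 ↔
    K * (1 - v.1 * v.2) - F * v.1 ≠ 0 ∧ F * (1 - u.1 * u.2) + K * u.1 ≠ 0 ∧ g ≠ 0 ∧ E ≠ 0
  rw [hq, hr, mul_ne_zero_iff_left (norm_slitPoint_pos v).ne',
    mul_ne_zero_iff_left (norm_slitPoint_pos u).ne']
  have hv := slitPolar_mem_polarDomain v
  have hu := slitPolar_mem_polarDomain u
  tauto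

theorem cellDomain_subset_range_polarize : cellDomain ⊆ Set.range polarize := by
  rintro ⟨x, θs, φt⟩ h
  obtain ⟨v, hv⟩ : θs ∈ Set.range slitPolar := range_slitPolar ▸ h.1
  obtain ⟨u, hu⟩ : φt ∈ Set.range slitPolar := range_slitPolar ▸ h.2.1
  exact ⟨(x, v, u), Prod.ext rfl (Prod.ext hv hu)⟩

theorem range_polarize_minorCoord :
    Set.range (fun L : BL 5 σ43521 => polarize (minorCoord L)) = cellDomain := by
  have hpreimage : polarize ⁻¹' cellDomain = coordDomain :=
    Set.ext fun _ => polarize_mem_cellDomain_iff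
  rw [← Function.comp_def polarize, Set.range_comp, range_minorCoord, ← hpreimage,
    Set.image_preimage_eq_of_subset cellDomain_subset_range_polarize]

end Coordinates

theorem card_cellIndex : Nat.card CellIndex = 48 := by
  simp [Nat.card_eq_fintype_card]

/-- `BL_{[43521]} ⊂ Lo¹₅` has exactly 48 connected components,
all of which are contractible. -/
theorem stmt6 :
    Nat.card (ConnectedComponents ↥(BL 5 σ43521)) = 48 ∧
      ∀ L : ↥(BL 5 σ43521), ContractibleSpace ↥(connectedComponent L) := by
  rw [← card_cellIndex]
  exact card_connectedComponents_and_contractibleSpace_of_isEmbedding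
    (isEmbedding_polarize.comp isEmbedding_minorCoord) isOpen_cell pairwise_disjoint_cell
    contractibleSpace_cell (range_polarize_minorCoord.trans iUnion_cell.symm)
end

section
/- Let η ∈ S₅ be the longest permutation, η(i) = 6 − i for all i (complete notation [54321]). The set BL_η ⊂ Lo¹₅ (naturally identified with the intersection of two open big Bruhat cells in general position) has exactly 52 connected components, and every connected component of BL_η is contractible. -/
open Matrix

/-- The longest permutation `η = [54321] ∈ S₅`, `η(i) = 6 − i`
(here `0`-indexed on `Fin 5`). -/
def η5 : Equiv.Perm (Fin 5) :=
  ⟨![4, 3, 2, 1, 0], ![4, 3, 2, 1, 0], by decide, by decide⟩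

/-! A matrix in `Lo¹₅` lies in the big cell of `η` exactly when its four proper south-west minors
are nonzero. In suitable coordinates `((u, v), z), t` with `u v z : ℂ` and `t : Fin 4 → ℝ` these
minors are affine in `t`, so the set where they have prescribed signs has convex fibres over an open
set of base points and is homotopy equivalent to it. Changing signs of coordinates reduces the
sixteen sign patterns to `(ε, 1, κ, 1)`, each occurring four times.

Dividing out the moduli and the mean argument of `u` and `v` turns the base into a
set of pairs `(φ, ζ)`, `|φ| < 2 * π`, `ζ : ℂ`. For `κ = 1` it is the locus where
`0 < ε cos φ` or two linear forms in `ζ` are both nonzero; it splits into sectors centred at the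
angles `n π` with `(-1) ^ n = ε`, which are star-shaped for `|n| ≤ 2`, while those for `n = ± 3` are
truncated to two corners each. For `κ = -1` it is the complement of a line depending continuously on
`φ`, that is, two half strips for each `ε`. Altogether there are `5 + 4 + 4 = 13` contractible
chambers, hence `4 * 13 = 52` components. -/

open Set Topology Function

section Topology

variable {X ι : Type*} [TopologicalSpace X] {P : ι → Set X}

lemma connectedComponent_eq_of_isOpen_partition (hopen : ∀ i, IsOpen (P i))
    (hconn : ∀ i, IsConnected (P i)) (hdisj : Pairwise (Disjoint on P)) (hcover : ⋃ i, P i = univ)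
    {x : X} {i : ι} (hx : x ∈ P i) : connectedComponent x = P i := by
  have hcompl : (P i)ᶜ = ⋃ j ≠ i, P j := by
    ext y
    obtain ⟨k, hk⟩ := mem_iUnion.1 (hcover.symm ▸ mem_univ y)
    simp only [mem_compl_iff, mem_iUnion]
    refine ⟨fun hy => ⟨k, fun hki => hy (hki ▸ hk), hk⟩, ?_⟩
    rintro ⟨j, hji, hj⟩ hy
    exact (hdisj hji).le_bot ⟨hj, hy⟩
  have hclopen : IsClopen (P i) :=
    ⟨⟨hcompl ▸ isOpen_biUnion fun j _ => hopen j⟩, hopen i⟩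
  exact (hclopen.connectedComponent_subset hx).antisymm
    ((hconn i).isPreconnected.subset_connectedComponent hx)

lemma natCard_connectedComponents_of_isOpen_partition (hopen : ∀ i, IsOpen (P i))
    (hconn : ∀ i, IsConnected (P i)) (hdisj : Pairwise (Disjoint on P))
    (hcover : ⋃ i, P i = univ) : Nat.card (ConnectedComponents X) = Nat.card ι := by
  have hcomp {x : X} {i : ι} := connectedComponent_eq_of_isOpen_partition hopen hconn hdisj hcover
    (x := x) (i := i)
  choose p hp using fun i => (hconn i).nonempty
  refine (Nat.card_eq_of_bijective (fun i => (p i : ConnectedComponents X)) ⟨fun i j hij => ?_,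
    ConnectedComponents.surjective_coe.forall.2 fun x => ?_⟩).symm
  · rw [ConnectedComponents.coe_eq_coe, hcomp (hp i), hcomp (hp j)] at hij
    exact hdisj.eq (not_disjoint_iff.2 ⟨p i, hp i, hij ▸ hp i⟩)
  · obtain ⟨i, hi⟩ := mem_iUnion.1 (hcover.symm ▸ mem_univ x)
    exact ⟨i, ConnectedComponents.coe_eq_coe.2 ((hcomp (hp i)).trans (hcomp hi).symm)⟩

lemma contractibleSpace_preimage_of_isEmbedding {Y : Type*} [TopologicalSpace Y] {f : X → Y}
    (hf : IsEmbedding f) {B : Set Y} (hB : B ⊆ range f) [ContractibleSpace B] :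
    ContractibleSpace (f ⁻¹' B) :=
  ((hf.homeomorphImage (f ⁻¹' B)).trans
    (Homeomorph.setCongr (image_preimage_eq_of_subset hB))).contractibleSpace

lemma contractibleSpace_of_convex_fibers {A F : Type*} [PseudoMetricSpace A] [AddCommGroup F]
    [TopologicalSpace F] [ContinuousAdd F] [Module ℝ F] [ContinuousSMul ℝ F] {B : Set (A × F)}
    (hB : IsOpen B) (hconv : ∀ a, Convex ℝ {t | (a, t) ∈ B})
    [ContractibleSpace (Prod.fst '' B)] : ContractibleSpace B := by
  obtain ⟨g, hg⟩ := exists_continuous_forall_mem_convex_of_local_const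
    (X := Prod.fst '' B) (t := fun a => {t | (a.1, t) ∈ B}) (fun a => hconv a) (by
      rintro ⟨-, ⟨a, t⟩, hat, rfl⟩
      have hcont : Continuous fun y : Prod.fst '' B => (y.1, t) := by fun_prop
      exact ⟨t, hcont.continuousAt.preimage_mem_nhds (hB.mem_nhds hat)⟩)
  let proj : C(B, Prod.fst '' B) := ⟨fun x => ⟨x.1.1, mem_image_of_mem _ x.2⟩, by fun_prop⟩
  let sec : C(Prod.fst '' B, B) := ⟨fun a => ⟨(a, g a), hg a⟩, by fun_prop⟩
  let slide : ContinuousMap.Homotopy (sec.comp proj) (ContinuousMap.id B) :=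
    { toFun := fun q => ⟨(q.2.1.1, (1 - q.1 : ℝ) • g (proj q.2) + (q.1 : ℝ) • q.2.1.2),
        hconv _ (hg (proj q.2)) q.2.2 (sub_nonneg.2 q.1.2.2) q.1.2.1 (sub_add_cancel _ _)⟩
      continuous_toFun := by fun_prop
      map_zero_left := fun x => by simp [sec, proj]
      map_one_left := fun x => by simp }
  let e : ContinuousMap.HomotopyEquiv B (Prod.fst '' B) :=
    { toFun := proj
      invFun := sec
      left_inv := ⟨slide⟩
      right_inv := .refl _ }
  exact e.contractibleSpace

end Topology

section GaussDecomposition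

variable {K : Type*} [Field K] {m k : ℕ} {N L U : Matrix (Fin m) (Fin m) K}

/-- The leading principal `k × k` block of a square matrix; its determinants are the leading
principal minors that govern the Gauss decomposition. -/
abbrev leadingBlock (hk : k ≤ m) (N : Matrix (Fin m) (Fin m) K) : Matrix (Fin k) (Fin k) K :=
  N.submatrix (Fin.castLE hk) (Fin.castLE hk)

lemma sum_castLE_of_eq_zero (hk : k ≤ m) {f : Fin m → K} (hf : ∀ l : Fin m, k ≤ l → f l = 0) :
    ∑ l, f (Fin.castLE hk l) = ∑ l, f l :=
  Fintype.sum_of_injective _ (Fin.castLE_injective hk) _ _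
    (fun l hl => hf l (not_lt.1 fun hlk => hl ⟨⟨l, hlk⟩, rfl⟩)) fun _ => rfl

lemma leadingBlock_mul (hk : k ≤ m) (hL : L.IsLowerTriangular) :
    leadingBlock hk (L * U) = leadingBlock hk L * leadingBlock hk U := by
  ext i j
  refine (sum_castLE_of_eq_zero hk (f := fun l => L (Fin.castLE hk i) l * U l (Fin.castLE hk j))
    fun l hl => ?_).symm
  have hil : L (Fin.castLE hk i) l = 0 := hL (Fin.lt_def.2 (i.2.trans_le hl))
  rw [hil, zero_mul]

lemma det_leadingBlock_ne_zero_of_isLowerTriangular (hk : k ≤ m) (hL : L.IsLowerTriangular)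
    (hdet : L.det ≠ 0) : (leadingBlock hk L).det ≠ 0 := by
  have hblock : (leadingBlock hk L).IsLowerTriangular := fun _ _ hij => hL hij
  rw [det_of_isLowerTriangular _ hL, Finset.prod_ne_zero_iff] at hdet
  rw [det_of_isLowerTriangular _ hblock, Finset.prod_ne_zero_iff]
  exact fun i _ => hdet _ (Finset.mem_univ _)

lemma det_leadingBlock_ne_zero_of_isUpperTriangular (hk : k ≤ m) (hU : U.IsUpperTriangular)
    (hdet : U.det ≠ 0) : (leadingBlock hk U).det ≠ 0 := by
  rw [← det_transpose] at hdet ⊢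
  exact det_leadingBlock_ne_zero_of_isLowerTriangular hk hU.transpose hdet

/-- The lower triangular factor of Gaussian elimination on `N`: its `i`-th row is the last row of
the inverse of the leading block of size `i + 1`, so that row `i` of `gaussEliminator N * N` is
that of the identity up to the diagonal. -/
noncomputable def gaussEliminator (N : Matrix (Fin m) (Fin m) K) : Matrix (Fin m) (Fin m) K :=
  fun i j => if hj : j ≤ i then
    (leadingBlock i.2 N)⁻¹ (Fin.last i) ⟨j, Nat.lt_succ_of_le hj⟩ else 0

lemma isLowerTriangular_gaussEliminator : (gaussEliminator N).IsLowerTriangular :=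
  fun _ _ hij => dif_neg (not_le.2 hij)

lemma gaussEliminator_mul_apply_of_le (hN : ∀ k (hk : k ≤ m), (leadingBlock hk N).det ≠ 0)
    {i j : Fin m} (hij : j ≤ i) :
    (gaussEliminator N * N) i j = (1 : Matrix (Fin m) (Fin m) K) i j := by
  let j' : Fin (i + 1) := ⟨j, Nat.lt_succ_of_le hij⟩
  have hrow : leadingBlock i.2 (gaussEliminator N) (Fin.last i) =
      (leadingBlock i.2 N)⁻¹ (Fin.last i) :=
    funext fun l => dif_pos (Fin.le_def.2 (Nat.le_of_lt_succ l.2))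
  calc (gaussEliminator N * N) i j
      = (leadingBlock i.2 (gaussEliminator N) * leadingBlock i.2 N) (Fin.last i) j' :=
        congr_fun₂ (leadingBlock_mul i.2 isLowerTriangular_gaussEliminator) (Fin.last i) j'
    _ = ((leadingBlock i.2 N)⁻¹ * leadingBlock i.2 N) (Fin.last i) j' :=
        by rw [mul_apply_eq_vecMul, mul_apply_eq_vecMul, hrow]
    _ = (1 : Matrix (Fin m) (Fin m) K) i j := by
        rw [nonsing_inv_mul _ (hN _ _).isUnit, one_apply, one_apply]
        simp only [j', Fin.ext_iff, Fin.val_last]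

lemma exists_lower_mul_upper_iff :
    (∃ L U : Matrix (Fin m) (Fin m) K, (L.IsLowerTriangular ∧ L.det ≠ 0) ∧
      (U.IsUpperTriangular ∧ U.det ≠ 0) ∧ N = L * U) ↔
    ∀ k (hk : k ≤ m), (leadingBlock hk N).det ≠ 0 := by
  constructor
  · rintro ⟨L, U, ⟨hL, hLdet⟩, ⟨hU, hUdet⟩, rfl⟩ k hk
    rw [leadingBlock_mul hk hL, det_mul]
    exact mul_ne_zero (det_leadingBlock_ne_zero_of_isLowerTriangular hk hL hLdet)
      (det_leadingBlock_ne_zero_of_isUpperTriangular hk hU hUdet)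
  · intro hN
    have hUpper : (gaussEliminator N * N).IsUpperTriangular := fun i j (hij : j < i) =>
      (gaussEliminator_mul_apply_of_le hN hij.le).trans (one_apply_ne hij.ne')
    have hdet : (gaussEliminator N * N).det = 1 := by
      rw [det_of_isUpperTriangular hUpper]
      exact Finset.prod_eq_one fun i _ =>
        (gaussEliminator_mul_apply_of_le hN le_rfl).trans (one_apply_eq i)
    have hV : IsUnit (gaussEliminator N).det := .of_mul_eq_one N.det (by rwa [← det_mul])
    have : Invertible (gaussEliminator N) := invertibleOfIsUnitDet _ hV
    exact ⟨(gaussEliminator N)⁻¹, gaussEliminator N * N,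
      ⟨blockTriangular_inv_of_blockTriangular isLowerTriangular_gaussEliminator,
        (isUnit_nonsing_inv_det _ hV).ne_zero⟩,
      ⟨hUpper, hdet ▸ one_ne_zero⟩, (nonsing_inv_mul_cancel_left _ _ hV).symm⟩

end GaussDecomposition

section BigCell

variable {m : ℕ} {M U : Matrix (Fin m) (Fin m) ℝ}

lemma permMat_eq_submatrix_one (σ : Equiv.Perm (Fin m)) :
    permMat m σ = (1 : Matrix (Fin m) (Fin m) ℝ).submatrix σ id := rfl

lemma mul_permMat_revPerm : U * permMat m Fin.revPerm = U.submatrix id Fin.rev := by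
  rw [permMat_eq_submatrix_one, mul_submatrix_one]
  rfl

lemma mem_UpInv_iff_s7 : U ∈ UpInv m ↔ U.IsUpperTriangular ∧ U.det ≠ 0 := by
  rw [← isUnit_iff_ne_zero]
  rfl

lemma submatrix_rev_mem_UpInv_iff :
    U.submatrix Fin.rev Fin.rev ∈ UpInv m ↔ U.IsLowerTriangular ∧ U.det ≠ 0 := by
  have htri : (U.submatrix Fin.rev Fin.rev).IsUpperTriangular ↔ U.IsLowerTriangular :=
    Fin.rev_surjective.forall.trans <| forall_congr' fun i => Fin.rev_surjective.forall.trans <|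
      forall_congr' fun j => by
        simp only [submatrix_apply, Fin.rev_rev, id, Fin.rev_lt_rev, OrderDual.toDual_lt_toDual]
  rw [mem_UpInv_iff_s7, htri, ← det_submatrix_equiv_self Fin.revPerm U]
  rfl

lemma mem_Bru_revPerm_iff :
    M ∈ Bru m Fin.revPerm ↔
      ∀ k (hk : k ≤ m), (leadingBlock hk (M.submatrix Fin.rev id)).det ≠ 0 := by
  have hflip : Involutive fun A : Matrix (Fin m) (Fin m) ℝ => A.submatrix Fin.rev id :=
    fun A => by ext; simp
  have hturn : Involutive fun A : Matrix (Fin m) (Fin m) ℝ => A.submatrix Fin.rev Fin.rev :=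
    fun A => by ext; simp
  have hfactor (L V : Matrix (Fin m) (Fin m) ℝ) :
      M = L.submatrix Fin.rev Fin.rev * permMat m Fin.revPerm * V ↔
        M.submatrix Fin.rev id = L * V := by
    rw [mul_permMat_revPerm, submatrix_submatrix, Fin.rev_involutive.comp_self]
    exact (hflip.eq_iff (x := M) (y := L * V)).symm
  rw [← exists_lower_mul_upper_iff, Bru, mem_ofPred_eq, hturn.surjective.exists]
  simp only [submatrix_rev_mem_UpInv_iff, hfactor]
  simp only [mem_UpInv_iff_s7, exists_and_left]

end BigCell

section Coordinates

open ComplexConjugate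

/-- The scalar product of two complex numbers viewed as plane vectors. -/
def dot (v u : ℂ) : ℝ := (conj v * u).re

/-- The determinant of two complex numbers viewed as plane vectors. -/
def cross (z u : ℂ) : ℝ := (conj z * u).im

lemma dot_eq (v u : ℂ) : dot v u = v.re * u.re + v.im * u.im := by
  simp [dot]

lemma cross_eq (z u : ℂ) : cross z u = z.re * u.im - z.im * u.re := by
  simp [cross, sub_eq_add_neg]

/-- The six coordinates `((u, v), z)` on `Lo¹₅` that the south-west minors see nonlinearly. -/
abbrev Base : Type := (ℂ × ℂ) × ℂ

/-- Coordinates on `Lo¹₅`: a base point and four fibre coordinates, in which the south-west minors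
are affine. -/
abbrev Coord : Type := Base × (Fin 4 → ℝ)

/-- The matrix in `Lo¹₅` with the given coordinates. -/
def toMatrix : Coord → Matrix (Fin 5) (Fin 5) ℝ
  | (((u, v), z), t) =>
    !![1, 0, 0, 0, 0;
      -t 3, 1, 0, 0, 0;
      z.re, z.im, 1, 0, 0;
      v.im, -v.re, -t 2, 1, 0;
      u.re + t 0 * z.re + t 1 * v.im, u.im + t 0 * z.im - t 1 * v.re, t 0 - t 1 * t 2, t 1, 1]

/-- The coordinates of a matrix in `Lo¹₅`, inverse to `toMatrix`. -/
def ofMatrix (L : Matrix (Fin 5) (Fin 5) ℝ) : Coord :=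
  let t₀ := L 4 2 - L 4 3 * L 3 2
  (((⟨L 4 0 - t₀ * L 2 0 - L 4 3 * L 3 0, L 4 1 - t₀ * L 2 1 - L 4 3 * L 3 1⟩,
    ⟨-L 3 1, L 3 0⟩), ⟨L 2 0, L 2 1⟩), ![t₀, L 4 3, -L 3 2, -L 1 0])

/-- The south-west minors of `toMatrix (b, t)` of sizes `1`, `2`, `3`, `4`, up to sign. -/
def swMinor (b : Base) (t : Fin 4 → ℝ) : Fin 4 → ℝ :=
  ![b.1.1.re + t 0 * b.2.re + t 1 * b.1.2.im, dot b.1.2 b.1.1 + t 0 * dot b.1.2 b.2,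
    dot b.1.2 b.1.1 + t 2 * cross b.2 b.1.1, b.1.1.re + t 3 * b.1.1.im]

lemma continuous_toMatrix : Continuous toMatrix := by
  unfold toMatrix
  fun_prop

lemma continuous_complex_mk {X : Type*} [TopologicalSpace X] {f g : X → ℝ} (hf : Continuous f)
    (hg : Continuous g) : Continuous fun x => (⟨f x, g x⟩ : ℂ) :=
  Complex.equivRealProdCLM.symm.continuous.comp (hf.prodMk hg)

lemma continuous_ofMatrix : Continuous ofMatrix :=
  ((Continuous.prodMk (continuous_complex_mk (by fun_prop) (by fun_prop))
    (continuous_complex_mk (by fun_prop) (by fun_prop))).prodMk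
    (continuous_complex_mk (by fun_prop) (by fun_prop))).prodMk (by fun_prop)

lemma continuous_swMinor : Continuous fun x : Coord => swMinor x.1 x.2 := by
  simp only [swMinor, dot_eq, cross_eq]
  fun_prop

lemma toMatrix_mem_Lo1 (x : Coord) : toMatrix x ∈ Lo1 5 := by
  refine ⟨fun i => ?_, fun i j => ?_⟩
  · fin_cases i <;> simp [toMatrix]
  · fin_cases i <;> fin_cases j <;> simp [toMatrix]

lemma ofMatrix_toMatrix (x : Coord) : ofMatrix (toMatrix x) = x := by
  obtain ⟨⟨⟨u, v⟩, z⟩, t⟩ := x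
  refine Prod.ext (Prod.ext (Prod.ext ?_ ?_) ?_) (funext fun i => ?_)
  · apply Complex.ext <;> simp [ofMatrix, toMatrix] <;> ring
  · simp [ofMatrix, toMatrix]
  · simp [ofMatrix, toMatrix]
  · fin_cases i <;> simp [ofMatrix, toMatrix]

lemma toMatrix_ofMatrix {L : Matrix (Fin 5) (Fin 5) ℝ} (hL : L ∈ Lo1 5) :
    toMatrix (ofMatrix L) = L := by
  obtain ⟨hdiag, hupper⟩ := hL
  ext i j
  obtain hij | rfl | hij := lt_trichotomy i j
  · rw [hupper i j hij, (toMatrix_mem_Lo1 _).2 i j hij]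
  · rw [hdiag, (toMatrix_mem_Lo1 _).1]
  · fin_cases i <;> fin_cases j <;> simp [toMatrix, ofMatrix] at hij ⊢ <;> ring

lemma det_leadingBlock_rev_toMatrix (x : Coord) (i : Fin 4) :
    (leadingBlock (Nat.succ_le_succ i.2.le) ((toMatrix x).submatrix Fin.rev id)).det =
      ![1, -1, -1, -1] i * swMinor x.1 x.2 i := by
  obtain ⟨⟨⟨u, v⟩, z⟩, t⟩ := x
  fin_cases i
  · simp [toMatrix, swMinor]
  · simp [toMatrix, swMinor, det_fin_two, dot_eq]
    ring
  · simp [toMatrix, swMinor, det_fin_three, dot_eq, cross_eq]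
    ring
  · simp [toMatrix, swMinor, det_succ_row_zero, Fin.sum_univ_succ, Fin.succAbove]
    ring

lemma toMatrix_mem_Bru_iff (x : Coord) :
    toMatrix x ∈ Bru 5 η5 ↔ ∀ i, swMinor x.1 x.2 i ≠ 0 := by
  have hη : η5 = Fin.revPerm := by decide
  have hminor (i : Fin 4) : swMinor x.1 x.2 i ≠ 0 ↔
      (leadingBlock (Nat.succ_le_succ i.2.le) ((toMatrix x).submatrix Fin.rev id)).det ≠ 0 := by
    rw [det_leadingBlock_rev_toMatrix]
    fin_cases i <;> simp
  have hdet : ((toMatrix x).submatrix Fin.revPerm id).det ≠ 0 := by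
    have htri : (toMatrix x).IsLowerTriangular := fun i j => (toMatrix_mem_Lo1 x).2 i j
    rw [det_permute, det_of_isLowerTriangular _ htri,
      Finset.prod_congr rfl fun i _ => (toMatrix_mem_Lo1 x).1 i]
    simp
  rw [hη, mem_Bru_revPerm_iff]
  simp only [hminor]
  refine ⟨fun h i => h _ _, fun h k hk => ?_⟩
  obtain rfl | hk₀ := k.eq_zero_or_pos
  · simp
  obtain rfl | hk₅ := hk.eq_or_lt
  · exact hdet
  · obtain ⟨k, rfl⟩ := Nat.exists_eq_succ_of_ne_zero hk₀.ne'
    exact h ⟨k, by omega⟩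

lemma isEmbedding_ofMatrix_BL : IsEmbedding fun L : BL 5 η5 => ofMatrix L := by
  refine .of_comp (continuous_ofMatrix.comp continuous_subtype_val) continuous_toMatrix ?_
  have hleft : toMatrix ∘ (fun L : BL 5 η5 => ofMatrix L) = Subtype.val :=
    funext fun L => toMatrix_ofMatrix L.2.1
  rw [hleft]
  exact .subtypeVal

lemma range_ofMatrix_BL :
    range (fun L : BL 5 η5 => ofMatrix L) = {x | ∀ i, swMinor x.1 x.2 i ≠ 0} := by
  ext x
  rw [mem_ofPred_eq, ← toMatrix_mem_Bru_iff]
  refine ⟨?_, fun hx => ⟨⟨toMatrix x, toMatrix_mem_Lo1 x, hx⟩, ofMatrix_toMatrix x⟩⟩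
  rintro ⟨L, rfl⟩
  rw [toMatrix_ofMatrix L.2.1]
  exact L.2.2

end Coordinates

section Signs

lemma convex_setOf_forall_pos {ι E : Type*} [AddCommGroup E] [Module ℝ E] {f : E → ι → ℝ}
    (hf : ∀ (x y : E) (a b : ℝ), a + b = 1 → f (a • x + b • y) = a • f x + b • f y) :
    Convex ℝ {x | ∀ i, 0 < f x i} := by
  intro x hx y hy a b ha hb hab
  simp only [mem_ofPred_eq, hf x y a b hab]
  exact fun i => convex_Ioi (0 : ℝ) (hx i) (hy i) ha hb hab

lemma eq_of_pos_units_smul {s₁ s₂ : ℤˣ} {a : ℝ} (h₁ : 0 < s₁ • a) (h₂ : 0 < s₂ • a) : s₁ = s₂ := by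
  obtain rfl | rfl := Int.units_eq_one_or s₁ <;> obtain rfl | rfl := Int.units_eq_one_or s₂ <;>
    simp only [one_smul, Units.neg_smul] at h₁ h₂ ⊢ <;> linarith

lemma exists_pos_units_smul {a : ℝ} (ha : a ≠ 0) : ∃ s : ℤˣ, 0 < s • a :=
  ha.lt_or_gt.elim (fun h => ⟨-1, by simpa using h⟩) fun h => ⟨1, by simpa using h⟩

/-- The part of the coordinate space where the south-west minors have the prescribed signs. -/
def signCell (σ : Fin 4 → ℤˣ) : Set Coord :=
  {x | ∀ i, 0 < σ i • swMinor x.1 x.2 i}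

lemma isOpen_signCell (σ : Fin 4 → ℤˣ) : IsOpen (signCell σ) := by
  have hcont (i : Fin 4) : Continuous fun x : Coord => σ i • swMinor x.1 x.2 i :=
    (continuous_apply i |>.comp continuous_swMinor).const_smul _
  simp only [signCell, ofPred_forall]
  exact isOpen_iInter_of_finite fun i => isOpen_lt continuous_const (hcont i)

lemma swMinor_convex_comb (b : Base) (s t : Fin 4 → ℝ) {a c : ℝ} (hac : a + c = 1) :
    swMinor b (a • s + c • t) = a • swMinor b s + c • swMinor b t := by
  obtain rfl : c = 1 - a := by linarith
  ext i
  fin_cases i <;> simp [swMinor] <;> ring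

lemma convex_signCell_fiber (σ : Fin 4 → ℤˣ) (b : Base) : Convex ℝ {t | (b, t) ∈ signCell σ} :=
  convex_setOf_forall_pos fun s t a c hac => by
    ext i
    simp only [swMinor_convex_comb b s t hac, Pi.add_apply, Pi.smul_apply, smul_add,
      smul_comm (σ i)]

/-- The sign change of coordinates multiplying the first and last south-west minors by `s₁` and the
two middle ones by `s₂`. -/
noncomputable def signFlip (s₁ s₂ : ℤˣ) : Coord ≃ₜ Coord :=
  (((Homeomorph.smul s₁).prodCongr (Homeomorph.smul (s₁ * s₂))).prodCongr
    (Homeomorph.smul s₁)).prodCongr (.piCongrRight fun i => Homeomorph.smul (![1, s₂, s₂, 1] i))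

lemma swMinor_signFlip (s₁ s₂ : ℤˣ) (x : Coord) (i : Fin 4) :
    swMinor (signFlip s₁ s₂ x).1 (signFlip s₁ s₂ x).2 i =
      ![s₁, s₂, s₂, s₁] i • swMinor x.1 x.2 i := by
  obtain rfl | rfl := Int.units_eq_one_or s₁ <;> obtain rfl | rfl := Int.units_eq_one_or s₂ <;>
    fin_cases i <;> simp [swMinor, signFlip, dot_eq, cross_eq] <;> ring

lemma exists_pos_add_mul_iff {a b : ℝ} : (∃ t, 0 < a + t * b) ↔ 0 < a ∨ b ≠ 0 := by
  refine ⟨?_, ?_⟩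
  · rintro ⟨t, ht⟩
    by_contra! h
    rw [h.2, mul_zero, add_zero] at ht
    exact ht.not_ge h.1
  · rintro (ha | hb)
    · exact ⟨0, by simpa using ha⟩
    · exact ⟨(1 - a) / b, by rw [div_mul_cancel₀ _ hb]; linarith⟩

lemma exists_pos_units_smul_add_mul_iff {s : ℤˣ} {a b : ℝ} :
    (∃ t, 0 < s • (a + t * b)) ↔ 0 < s • a ∨ b ≠ 0 := by
  simp only [smul_add, ← mul_smul_comm]
  rw [exists_pos_add_mul_iff, smul_ne_zero_iff_ne]

lemma exists_pos_minor_pair_iff {ε : ℤˣ} {u v z : ℂ} :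
    (∃ t₀ t₁ : ℝ, 0 < ε • (u.re + t₀ * z.re + t₁ * v.im) ∧ 0 < dot v u + t₀ * dot v z) ↔
      ε • v ∈ Complex.slitPlane ∧ (0 < dot v u ∨ dot v z ≠ 0) := by
  rw [← exists_pos_add_mul_iff]
  by_cases hv : v.im = 0
  · have hprop (t₀ : ℝ) : dot v u + t₀ * dot v z = v.re * (u.re + t₀ * z.re) := by
      rw [dot_eq, dot_eq, hv]
      ring
    have hslit : ε • v ∈ Complex.slitPlane ↔ 0 < ε • v.re := by
      obtain rfl | rfl := Int.units_eq_one_or ε <;> simp [Complex.mem_slitPlane_iff, hv]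
    have hsign {a b : ℝ} (hab : 0 < a * b) : 0 < ε • b ↔ 0 < ε • a := by
      obtain rfl | rfl := Int.units_eq_one_or ε <;>
        obtain ⟨ha, hb⟩ | ⟨ha, hb⟩ := mul_pos_iff.1 hab <;> simp [ha, hb, ha.not_gt, hb.not_gt]
    simp only [hv, mul_zero, add_zero, exists_const, hprop, hslit]
    exact ⟨fun ⟨t₀, h₁, h₂⟩ => ⟨(hsign h₂).1 h₁, t₀, h₂⟩,
      fun ⟨h₁, t₀, h₂⟩ => ⟨t₀, (hsign h₂).2 h₁, h₂⟩⟩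
  · have hslit : ε • v ∈ Complex.slitPlane := by
      obtain rfl | rfl := Int.units_eq_one_or ε <;> simp [Complex.mem_slitPlane_iff, hv]
    have hfree (t₀ : ℝ) : ∃ t₁ : ℝ, 0 < ε • (u.re + t₀ * z.re + t₁ * v.im) :=
      exists_pos_units_smul_add_mul_iff.2 (.inr hv)
    simp only [exists_and_right, hfree, hslit, true_and]

/-- The base points over which some choice of the fibre coordinates gives the four south-west
minors the signs `ε`, `1`, `κ`, `1`. -/
def admissibleBase (ε κ : ℤˣ) : Set Base :=
  {b | b.1.1 ∈ Complex.slitPlane ∧ ε • b.1.2 ∈ Complex.slitPlane ∧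
    (0 < dot b.1.2 b.1.1 ∨ dot b.1.2 b.2 ≠ 0) ∧ (0 < κ • dot b.1.2 b.1.1 ∨ cross b.2 b.1.1 ≠ 0)}

lemma image_fst_signCell (ε κ : ℤˣ) :
    Prod.fst '' signCell ![ε, 1, κ, 1] = admissibleBase ε κ := by
  ext ⟨⟨u, v⟩, z⟩
  have hu : u ∈ Complex.slitPlane ↔ ∃ t₃, 0 < u.re + t₃ * u.im := by
    rw [exists_pos_add_mul_iff, Complex.mem_slitPlane_iff]
  simp only [admissibleBase, mem_ofPred_eq, hu, ← exists_pos_units_smul_add_mul_iff (s := κ)]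
  rw [← and_assoc (a := ε • v ∈ _), ← exists_pos_minor_pair_iff]
  constructor
  · rintro ⟨⟨b, t⟩, ht, rfl⟩
    exact ⟨⟨t 3, by simpa [swMinor] using ht 3⟩,
      ⟨t 0, t 1, ht 0, by simpa [swMinor] using ht 1⟩, t 2, ht 2⟩
  · rintro ⟨⟨t₃, h₃⟩, ⟨t₀, t₁, h₀, h₁⟩, t₂, h₂⟩
    refine ⟨(((u, v), z), ![t₀, t₁, t₂, t₃]), fun i => ?_, rfl⟩
    fin_cases i
    exacts [h₀, by simpa [swMinor] using h₁, h₂, by simpa [swMinor] using h₃]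

end Signs

noncomputable section Chambers

open Real

/-- The part of a base point that remains after normalizing the moduli of `u` and `v` and their
mean argument `m`: the angle `φ` from `v` to `u` and the number `ζ = z e^{-im}`. -/
abbrev Reduced : Type := ℝ × ℂ

/-- The scalar product of `e^{-iφ/2}`, the normalized `v`, with `ζ`. -/
def reducedDot (y : Reduced) : ℝ := y.2.re * cos (y.1 / 2) - y.2.im * sin (y.1 / 2)

/-- The determinant of `ζ` and `e^{iφ/2}`, the normalized `u`. -/
def reducedCross (y : Reduced) : ℝ := y.2.re * sin (y.1 / 2) - y.2.im * cos (y.1 / 2)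

/-- The range of angles realized by two arguments in `(-π, π)`. -/
def strip : Set Reduced := Ioo (-(2 * π)) (2 * π) ×ˢ univ

/-- The counterpart of `admissibleBase` in the reduced coordinates. -/
def admissibleReduced (ε κ : ℤˣ) : Set Reduced :=
  {y | y ∈ strip ∧ (0 < ε • cos y.1 ∨ reducedDot y ≠ 0) ∧
    (0 < (κ * ε) • cos y.1 ∨ reducedCross y ≠ 0)}

lemma continuous_reducedDot : Continuous reducedDot := by
  unfold reducedDot
  fun_prop

lemma continuous_reducedCross : Continuous reducedCross := by
  unfold reducedCross
  fun_prop

/-- The product of `reducedDot` and `reducedCross`, with the sign of `cos (n π)`. -/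
def pairing (n : ℤ) (y : Reduced) : ℝ :=
  n.negOnePow • (reducedDot y * reducedCross y)

lemma continuous_pairing (n : ℤ) : Continuous (pairing n) :=
  (continuous_reducedDot.mul continuous_reducedCross).const_smul _

lemma pairing_eq (n : ℤ) (y : Reduced) :
    pairing n y = (y.2.re ^ 2 + y.2.im ^ 2) * sin (y.1 - n * π) / 2 -
      n.negOnePow • (y.2.re * y.2.im) := by
  have hdouble : sin y.1 = 2 * sin (y.1 / 2) * cos (y.1 / 2) := by
    rw [← sin_two_mul, mul_div_cancel₀ _ two_ne_zero]
  rw [pairing, reducedDot, reducedCross, sin_sub_int_mul_pi, hdouble, ← Int.cast_negOnePow]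
  simp only [Units.smul_def, zsmul_eq_mul]
  linear_combination (-(n.negOnePow : ℤ) * y.2.re * y.2.im : ℝ) * sin_sq_add_cos_sq (y.1 / 2)

/-- The points that `sector n` allows on the side of `φ = n π` given by the sign `δ`: up to distance
`π / 2` from `n π` all of them, up to `3 π / 2` only those where `pairing n` has sign `δ`. -/
def sectorSide (n : ℤ) (δ : ℤˣ) : Set Reduced :=
  {y | δ • (y.1 - n * π) < π / 2 ∨ δ • (y.1 - n * π) < 3 * π / 2 ∧ 0 < δ • pairing n y}

/-- The part of the reduced space around the angle `n π` on which
`0 < (-1) ^ n * cos φ ∨ reducedDot ≠ 0 ∧ reducedCross ≠ 0` is kept by shrinking `ζ` and moving `φ`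
towards `n π`. -/
def sector (n : ℤ) : Set Reduced := ⋂ δ, sectorSide n δ

lemma isOpen_sectorSide (n : ℤ) (δ : ℤˣ) : IsOpen (sectorSide n δ) := by
  have hangle : Continuous fun y : Reduced => δ • (y.1 - n * π) := by fun_prop
  exact (isOpen_lt hangle continuous_const).union <| (isOpen_lt hangle continuous_const).inter <|
    isOpen_lt continuous_const ((continuous_pairing n).const_smul δ)

lemma isOpen_sector (n : ℤ) : IsOpen (sector n) :=
  isOpen_iInter_of_finite fun δ => isOpen_sectorSide n δ

lemma sin_units_smul (δ : ℤˣ) (x : ℝ) : sin (δ • x) = δ • sin x := by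
  obtain rfl | rfl := Int.units_eq_one_or δ <;> simp

lemma sin_le_sin_of_pi_div_two_le {x y : ℝ} (hx : π / 2 ≤ x) (hxy : x ≤ y) (hy : y ≤ 3 * π / 2) :
    sin y ≤ sin x := by
  rw [← sin_pi_sub x, ← sin_pi_sub y]
  exact sin_le_sin_of_le_of_le_pi_div_two (by linarith) (by linarith) (by linarith)

lemma units_smul_pairing_eq (n : ℤ) (δ : ℤˣ) (y : Reduced) :
    δ • pairing n y = (y.2.re ^ 2 + y.2.im ^ 2) * sin (δ • (y.1 - n * π)) / 2 -
      (δ * n.negOnePow) • (y.2.re * y.2.im) := by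
  rw [pairing_eq, smul_sub, smul_smul, sin_units_smul]
  simp only [Units.smul_def, zsmul_eq_mul]
  ring

lemma starConvex_sectorSide {n : ℤ} {c : ℝ} {δ : ℤˣ} (hc : δ • (c - n * π) < π / 2) :
    StarConvex ℝ ((c, 0) : Reduced) (sectorSide n δ) := by
  rintro ⟨φ, ζ⟩ hy a b ha hb hab
  have hangle : δ • ((a * c + b * φ) - n * π) =
      a • (δ • (c - n * π)) + b • (δ • (φ - n * π)) := by
    simp only [Units.smul_def, zsmul_eq_mul, smul_eq_mul]
    linear_combination (δ : ℤ) * n * π * hab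
  set ψ := δ • (φ - n * π)
  set ψ' := δ • ((a * c + b * φ) - n * π)
  by_contra hnot
  have hψ' : π / 2 ≤ ψ' := not_lt.1 fun h => hnot (.inl (by simpa using h))
  have hcψ : π / 2 ≤ ψ := by
    by_contra! hlt
    exact hψ'.not_gt (hangle.trans_lt (convex_Iio (π / 2) hc hlt ha hb hab))
  have hψ'ψ : ψ' ≤ ψ :=
    hangle.trans_le (convex_Iic ψ (hc.le.trans hcψ) self_mem_Iic ha hb hab)
  obtain ⟨hψ, hpair⟩ := hy.resolve_left hcψ.not_gt
  have hb' : 0 < b := by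
    refine hb.lt_of_ne fun h => ?_
    obtain rfl : a = 1 := by linarith
    rw [hangle, ← h, zero_smul, one_smul, add_zero] at hψ'
    exact hψ'.not_gt hc
  refine hnot (.inr ⟨by simpa using hψ'ψ.trans_lt hψ, ?_⟩)
  have hsin := sin_le_sin_of_pi_div_two_le hψ' hψ'ψ hψ.le
  rw [units_smul_pairing_eq] at hpair ⊢
  calc 0 < b ^ 2 * ((ζ.re ^ 2 + ζ.im ^ 2) * sin ψ / 2 - (δ * n.negOnePow) • (ζ.re * ζ.im)) :=
        mul_pos (pow_pos hb' 2) hpair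
    _ ≤ b ^ 2 * ((ζ.re ^ 2 + ζ.im ^ 2) * sin ψ' / 2 - (δ * n.negOnePow) • (ζ.re * ζ.im)) := by
        gcongr
    _ = _ := by
        simp [ψ', Units.smul_def]
        ring

lemma starConvex_sector {n : ℤ} {c : ℝ} (hc : |c - n * π| < π / 2) :
    StarConvex ℝ ((c, 0) : Reduced) (sector n) := by
  refine starConvex_iInter fun δ => starConvex_sectorSide ?_
  obtain rfl | rfl := Int.units_eq_one_or δ <;> simp <;> linarith [abs_lt.1 hc]

lemma units_smul_le_abs (δ : ℤˣ) (x : ℝ) : δ • x ≤ |x| := by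
  obtain rfl | rfl := Int.units_eq_one_or δ <;> simp [le_abs_self, neg_le_abs]

lemma exists_units_smul_eq_abs (x : ℝ) : ∃ δ : ℤˣ, δ • x = |x| := by
  obtain h | h := abs_choice x
  exacts [⟨1, by simpa using h.symm⟩, ⟨-1, by simpa using h.symm⟩]

lemma abs_sub_lt_of_mem_sector {n : ℤ} {y : Reduced} (hy : y ∈ sector n) :
    |y.1 - n * π| < 3 * π / 2 := by
  obtain ⟨δ, hδ⟩ := exists_units_smul_eq_abs (y.1 - n * π)
  obtain h | h := mem_iInter.1 hy δ
  exacts [hδ ▸ h.trans (by linarith [pi_pos]), hδ ▸ h.1]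

lemma pos_pairing_of_mem_sector {n : ℤ} {y : Reduced} (hy : y ∈ sector n) {δ : ℤˣ}
    (hδ : π / 2 ≤ δ • (y.1 - n * π)) : 0 < δ • pairing n y :=
  ((mem_iInter.1 hy δ).resolve_left hδ.not_gt).2

lemma mem_sector_of_abs_lt {n : ℤ} {y : Reduced} (hy : |y.1 - n * π| < π / 2) : y ∈ sector n :=
  mem_iInter.2 fun δ => .inl ((units_smul_le_abs δ _).trans_lt hy)

lemma mem_sector_of_pos_pairing {n : ℤ} {y : Reduced} {δ : ℤˣ}
    (hpos : 0 < δ • (y.1 - n * π)) (hlt : δ • (y.1 - n * π) < 3 * π / 2)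
    (hpair : 0 < δ • pairing n y) : y ∈ sector n := by
  refine mem_iInter.2 fun δ' => ?_
  obtain rfl | rfl := (eq_or_ne δ' δ).imp_right Int.units_ne_iff_eq_neg.1
  · exact .inr ⟨hlt, hpair⟩
  · refine .inl ?_
    rw [Units.neg_smul]
    linarith [pi_pos]

lemma negOnePow_smul_cos (n : ℤ) (x : ℝ) : n.negOnePow • cos x = cos (x - n * π) := by
  rw [cos_sub_int_mul_pi, ← Int.cast_negOnePow, Units.smul_def, zsmul_eq_mul]

lemma pos_cos_or_ne_zero_of_mem_sector {n : ℤ} {y : Reduced} (hy : y ∈ sector n) :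
    0 < n.negOnePow • cos y.1 ∨ reducedDot y ≠ 0 ∧ reducedCross y ≠ 0 := by
  obtain ⟨δ, hδ⟩ := exists_units_smul_eq_abs (y.1 - n * π)
  obtain hlt | hge := lt_or_ge |y.1 - n * π| (π / 2)
  · rw [negOnePow_smul_cos]
    exact .inl (cos_pos_of_mem_Ioo (abs_lt.1 hlt))
  · have hpair := (pos_pairing_of_mem_sector hy (hδ ▸ hge)).ne'
    rw [pairing, smul_ne_zero_iff_ne, smul_ne_zero_iff_ne] at hpair
    exact .inr (mul_ne_zero_iff.1 hpair)

lemma pairing_add_two_mul (n k : ℤ) (y : Reduced) : pairing (n + 2 * k) y = pairing n y := by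
  rw [pairing, pairing, Int.negOnePow_add, Int.negOnePow_two_mul, mul_one]

lemma eq_of_mem_sector {m n : ℤ} {y : Reduced} (hm : y ∈ sector m) (hn : y ∈ sector n)
    (hmn : m.negOnePow = n.negOnePow) : m = n := by
  wlog hle : m ≤ n generalizing m n
  · exact (this hn hm hmn.symm (le_of_not_ge hle)).symm
  obtain ⟨k, hk⟩ := (Int.negOnePow_eq_iff n m).1 hmn.symm
  obtain rfl : n = m + 2 * k := by lia
  have hm' := abs_lt.1 (abs_sub_lt_of_mem_sector hm)
  have hn' := abs_lt.1 (abs_sub_lt_of_mem_sector hn)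
  push_cast at hn'
  have hk2 : k < 2 := by
    by_contra! h
    have : (2 : ℝ) ≤ k := mod_cast h
    nlinarith [pi_pos]
  obtain rfl | rfl : k = 0 ∨ k = 1 := by lia
  · simp
  · have hupper := pos_pairing_of_mem_sector hm (δ := 1)
      (by rw [one_smul]; push_cast at hn'; linarith)
    have hlower := pos_pairing_of_mem_sector hn (δ := -1)
      (by rw [Units.neg_smul, one_smul]; push_cast; linarith)
    rw [pairing_add_two_mul, Units.neg_smul] at hlower
    linarith

lemma exists_negOnePow_eq_and_abs_sub_le (ε : ℤˣ) (x : ℝ) :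
    ∃ n : ℤ, n.negOnePow = ε ∧ |x - n * π| ≤ π := by
  obtain ⟨p, hp⟩ : ∃ p : ℤ, p.negOnePow = ε := by
    obtain rfl | rfl := Int.units_eq_one_or ε
    exacts [⟨0, Int.negOnePow_zero⟩, ⟨1, Int.negOnePow_one⟩]
  set r := (x - p * π) / (2 * π) with hr
  refine ⟨p + 2 * round r, by rw [Int.negOnePow_add, Int.negOnePow_two_mul, hp, mul_one], ?_⟩
  have hx : x - ↑(p + 2 * round r) * π = (r - round r) * (2 * π) := by
    rw [sub_mul, hr, div_mul_cancel₀ _ (by positivity)]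
    push_cast
    ring
  rw [hx, abs_mul, abs_of_pos two_pi_pos]
  nlinarith [abs_sub_round r, pi_pos]

lemma pairing_nonneg_of_units_smul_eq {n : ℤ} {y : Reduced} {δ : ℤˣ}
    (hδ : δ • (y.1 - n * π) = π / 2) : 0 ≤ δ • pairing n y := by
  rw [units_smul_pairing_eq, hδ, sin_pi_div_two]
  obtain h | h := Int.units_eq_one_or (δ * n.negOnePow) <;>
    rw [h] <;> simp only [Units.neg_smul, one_smul] <;>
    nlinarith [sq_nonneg (y.2.re + y.2.im), sq_nonneg (y.2.re - y.2.im)]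

lemma mem_sector_add_two_mul {n : ℤ} {y : Reduced} {δ : ℤˣ} (hlt : π / 2 < δ • (y.1 - n * π))
    (hle : δ • (y.1 - n * π) ≤ π) (hpair : δ • pairing n y < 0) :
    y ∈ sector (n + 2 * (δ : ℤ)) := by
  have hshift : (-δ) • (y.1 - ↑(n + 2 * (δ : ℤ)) * π) = 2 * π - δ • (y.1 - n * π) := by
    obtain rfl | rfl := Int.units_eq_one_or δ <;> simp <;> ring
  refine mem_sector_of_pos_pairing (δ := -δ) ?_ ?_ ?_
  · rw [hshift]
    linarith [pi_pos]
  · rw [hshift]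
    linarith
  · rwa [pairing_add_two_mul, Units.neg_smul, neg_pos]

lemma exists_mem_sector {ε : ℤˣ} {y : Reduced}
    (hy : 0 < ε • cos y.1 ∨ reducedDot y ≠ 0 ∧ reducedCross y ≠ 0) :
    ∃ n : ℤ, n.negOnePow = ε ∧ y ∈ sector n := by
  obtain ⟨n, rfl, hn⟩ := exists_negOnePow_eq_and_abs_sub_le ε y.1
  obtain ⟨δ, hδ⟩ := exists_units_smul_eq_abs (y.1 - n * π)
  obtain hlt | hge := lt_or_ge |y.1 - n * π| (π / 2)
  · exact ⟨n, rfl, mem_sector_of_abs_lt hlt⟩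
  have hcos : n.negOnePow • cos y.1 ≤ 0 := by
    rw [negOnePow_smul_cos, ← cos_abs]
    exact cos_nonpos_of_pi_div_two_le_of_le hge (by linarith)
  have hpair : δ • pairing n y ≠ 0 := by
    simpa [pairing, smul_ne_zero_iff_ne] using hy.resolve_left hcos.not_gt
  rw [← hδ] at hn hge
  obtain hneg | hpos := hpair.lt_or_gt
  · have hlt := hge.lt_of_ne' fun h => hneg.not_ge (pairing_nonneg_of_units_smul_eq h)
    exact ⟨n + 2 * δ, by rw [Int.negOnePow_add, Int.negOnePow_two_mul, mul_one],
      mem_sector_add_two_mul hlt hn hneg⟩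
  · exact ⟨n, rfl, mem_sector_of_pos_pairing (by linarith [pi_pos]) (by linarith [pi_pos]) hpos⟩

lemma isOpen_strip : IsOpen strip := isOpen_Ioo.prod isOpen_univ

lemma contractibleSpace_prod_univ_inter {I : Set ℝ} {C : Set Reduced} (hI : Convex ℝ I)
    (hne : I.Nonempty) (hopen : IsOpen (I ×ˢ univ ∩ C))
    (hconv : ∀ φ, Convex ℝ {ζ | (φ, ζ) ∈ C}) (hfiber : ∀ φ ∈ I, ∃ ζ, (φ, ζ) ∈ C) :
    ContractibleSpace ↥(I ×ˢ univ ∩ C) := by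
  have himage : Prod.fst '' (I ×ˢ univ ∩ C) = I := by
    ext φ
    simp only [mem_image, Prod.exists, exists_and_right, exists_eq_right, mem_inter_iff,
      prodMk_mem_set_prod_eq, mem_univ, and_true, exists_and_left, and_iff_left_iff_imp]
    exact hfiber φ
  have hconv' (φ : ℝ) : Convex ℝ {ζ | (φ, ζ) ∈ I ×ˢ univ ∩ C} := by
    by_cases hφ : φ ∈ I
    · simpa [hφ] using hconv φ
    · simp [hφ, convex_empty]
  have : ContractibleSpace ↥(Prod.fst '' (I ×ˢ univ ∩ C)) := by
    rw [himage]
    exact hI.contractibleSpace hne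
  exact contractibleSpace_of_convex_fibers hopen hconv'

lemma contractibleSpace_sector_inter_strip {n : ℤ} (hn : n ∈ Finset.Icc (-2) 2) :
    ContractibleSpace ↥(sector n ∩ strip) := by
  obtain ⟨hlo, hhi⟩ := Finset.mem_Icc.1 hn
  have hlo' : (-2 : ℝ) ≤ n := mod_cast hlo
  have hhi' : (n : ℝ) ≤ 2 := mod_cast hhi
  set c := 7 / 8 * (n * π) with hc
  have hsector : |c - n * π| < π / 2 := by
    rw [abs_lt, hc]
    constructor <;> nlinarith [pi_pos]
  have hstrip : ((c, 0) : Reduced) ∈ strip := by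
    refine ⟨?_, mem_univ _⟩
    rw [mem_Ioo, hc]
    constructor <;> nlinarith [pi_pos]
  exact ((starConvex_sector hsector).inter (((convex_Ioo _ _).prod convex_univ).starConvex
    hstrip)).contractibleSpace ⟨_, mem_sector_of_abs_lt hsector, hstrip⟩

lemma negOnePow_three_mul_units (δ : ℤˣ) : (3 * (δ : ℤ)).negOnePow = -1 := by
  obtain rfl | rfl := Int.units_eq_one_or δ <;> exact Int.negOnePow_odd _ (by decide)

lemma mem_sector_three_mul_inter_strip_iff {δ : ℤˣ} {y : Reduced} :
    y ∈ sector (3 * δ) ∩ strip ↔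
      δ • y.1 ∈ Ioo (3 * π / 2) (2 * π) ∧ 0 < δ • (reducedDot y * reducedCross y) := by
  have hangle : -δ • (y.1 - ↑(3 * (δ : ℤ)) * π) = 3 * π - δ • y.1 := by
    obtain rfl | rfl := Int.units_eq_one_or δ
    · simp
    · simp only [neg_neg, one_smul, Units.val_neg, Units.val_one, Units.neg_smul]
      push_cast
      ring
  have hstrip : y ∈ strip ↔ δ • y.1 ∈ Ioo (-(2 * π)) (2 * π) := by
    obtain rfl | rfl := Int.units_eq_one_or δ <;> simp [strip, neg_lt, and_comm]
  have hpair : -δ • pairing (3 * δ) y = δ • (reducedDot y * reducedCross y) := by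
    rw [pairing, negOnePow_three_mul_units, smul_smul, neg_mul_neg, mul_one]
  rw [mem_inter_iff, hstrip, ← hpair]
  refine ⟨fun ⟨hsector, _, hlt⟩ => ?_, fun ⟨⟨hgt, hlt⟩, hpos⟩ => ?_⟩
  · have habs := (units_smul_le_abs (-δ) _).trans_lt (abs_sub_lt_of_mem_sector hsector)
    rw [hangle] at habs
    exact ⟨⟨by linarith, hlt⟩,
      pos_pairing_of_mem_sector hsector (by rw [hangle]; linarith [pi_pos])⟩
  · exact ⟨mem_sector_of_pos_pairing (by rw [hangle]; linarith [pi_pos])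
      (by rw [hangle]; linarith) hpos, by linarith [pi_pos], hlt⟩

/-- The half of the truncated sector `sector (3 * δ) ∩ strip` where `reducedDot` has sign `s`. -/
def corner (δ s : ℤˣ) : Set Reduced := sector (3 * δ) ∩ strip ∩ {y | 0 < s • reducedDot y}

lemma isOpen_corner (δ s : ℤˣ) : IsOpen (corner δ s) :=
  ((isOpen_sector _).inter isOpen_strip).inter <|
    isOpen_lt continuous_const (continuous_reducedDot.const_smul s)

lemma units_smul_pos_and_mul_pos_iff {s t : ℤˣ} {a b : ℝ} :
    0 < t • (a * b) ∧ 0 < s • a ↔ 0 < s • a ∧ 0 < (t * s) • b := by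
  have hmul : t • (a * b) = s • a * (t * s) • b := by
    obtain rfl | rfl := Int.units_eq_one_or s <;> obtain rfl | rfl := Int.units_eq_one_or t <;>
      simp
  rw [hmul, and_comm]
  exact and_congr_right fun ha => mul_pos_iff_of_pos_left ha

lemma mem_corner_iff {δ s : ℤˣ} {y : Reduced} :
    y ∈ corner δ s ↔ δ • y.1 ∈ Ioo (3 * π / 2) (2 * π) ∧ 0 < s • reducedDot y ∧
      0 < (δ * s) • reducedCross y := by
  rw [← units_smul_pos_and_mul_pos_iff, ← and_assoc, ← mem_sector_three_mul_inter_strip_iff]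
  rfl

lemma exists_reducedDot_eq_and_reducedCross_eq {φ : ℝ} (hφ : cos φ ≠ 0) (a b : ℝ) :
    ∃ ζ : ℂ, reducedDot (φ, ζ) = a ∧ reducedCross (φ, ζ) = b := by
  have hdouble : cos φ = cos (φ / 2) ^ 2 - sin (φ / 2) ^ 2 := by
    rw [← cos_two_mul', mul_div_cancel₀ _ two_ne_zero]
  refine ⟨⟨(a * cos (φ / 2) - b * sin (φ / 2)) / cos φ,
    (a * sin (φ / 2) - b * cos (φ / 2)) / cos φ⟩, ?_, ?_⟩
  · rw [reducedDot]
    field_simp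
    rw [hdouble]
    ring
  · rw [reducedCross]
    field_simp
    rw [hdouble]
    ring

lemma isLinearMap_reducedDot (φ : ℝ) : IsLinearMap ℝ fun ζ : ℂ => reducedDot (φ, ζ) where
  map_add ζ ξ := by
    simp only [reducedDot, Complex.add_re, Complex.add_im]
    ring
  map_smul a ζ := by
    simp only [reducedDot, Complex.smul_re, Complex.smul_im, smul_eq_mul]
    ring

lemma isLinearMap_reducedCross (φ : ℝ) : IsLinearMap ℝ fun ζ : ℂ => reducedCross (φ, ζ) where
  map_add ζ ξ := by
    simp only [reducedCross, Complex.add_re, Complex.add_im]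
    ring
  map_smul a ζ := by
    simp only [reducedCross, Complex.smul_re, Complex.smul_im, smul_eq_mul]
    ring

lemma convex_setOf_pos_units_smul {E : Type*} [AddCommGroup E] [Module ℝ E] {f : E → ℝ}
    (hf : IsLinearMap ℝ f) (s : ℤˣ) : Convex ℝ {x | 0 < s • f x} :=
  convex_halfSpace_gt (s • hf.mk' f).isLinear 0

lemma cos_pos_of_units_smul_mem_Ioo {δ : ℤˣ} {φ : ℝ} (hφ : δ • φ ∈ Ioo (3 * π / 2) (2 * π)) :
    0 < cos φ := by
  have hcos : cos φ = cos (2 * π - δ • φ) := by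
    obtain rfl | rfl := Int.units_eq_one_or δ <;> simp [add_comm _ φ]
  exact hcos ▸ cos_pos_of_mem_Ioo ⟨by linarith [pi_pos, hφ.2], by linarith [hφ.1]⟩

lemma contractibleSpace_corner (δ s : ℤˣ) : ContractibleSpace (corner δ s) := by
  have heq : corner δ s = ((fun φ : ℝ => δ • φ) ⁻¹' Ioo (3 * π / 2) (2 * π)) ×ˢ univ ∩
      {y | 0 < s • reducedDot y ∧ 0 < (δ * s) • reducedCross y} := by
    ext y
    rw [mem_corner_iff]
    simp
  have hopen := isOpen_corner δ s
  rw [heq] at hopen ⊢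
  refine contractibleSpace_prod_univ_inter ((convex_Ioo _ _).is_linear_preimage
    ⟨smul_add δ, fun a φ => smul_comm δ a φ⟩) ⟨δ • (7 * π / 4), ?_⟩ hopen (fun φ => ?_)
    fun φ hφ => ?_
  · rw [mem_preimage, smul_smul, Int.units_mul_self, one_smul]
    constructor <;> linarith [pi_pos]
  · exact (convex_setOf_pos_units_smul (isLinearMap_reducedDot φ) s).inter
      (convex_setOf_pos_units_smul (isLinearMap_reducedCross φ) (δ * s))
  · obtain ⟨ζ, hdot, hcross⟩ := exists_reducedDot_eq_and_reducedCross_eq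
      (cos_pos_of_units_smul_mem_Ioo hφ).ne' (s • 1) ((δ * s) • 1)
    refine ⟨ζ, ?_, ?_⟩
    · rw [hdot, smul_smul, Int.units_mul_self, one_smul]
      exact one_pos
    · rw [hcross, smul_smul, Int.units_mul_self, one_smul]
      exact one_pos

/-- The square of this form is `4 * reducedCross ^ 2` where `0 ≤ ε * cos φ` and
`4 * reducedDot ^ 2` where `ε * cos φ ≤ 0`; unlike `reducedDot` and `reducedCross` themselves, it
is a continuous choice of a nonzero linear form in `ζ` with this property. -/
def halfForm (ε : ℤˣ) (y : Reduced) : ℝ :=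
  |cos (y.1 / 2) + sin (y.1 / 2)| * (y.2.re - y.2.im) -
    ε • (|cos (y.1 / 2) - sin (y.1 / 2)| * (y.2.re + y.2.im))

lemma continuous_halfForm (ε : ℤˣ) : Continuous (halfForm ε) := by
  unfold halfForm
  fun_prop

lemma isLinearMap_halfForm (ε : ℤˣ) (φ : ℝ) : IsLinearMap ℝ fun ζ : ℂ => halfForm ε (φ, ζ) where
  map_add ζ ξ := by
    simp only [halfForm, Complex.add_re, Complex.add_im, Units.smul_def, zsmul_eq_mul]
    ring
  map_smul a ζ := by
    simp only [halfForm, Complex.smul_re, Complex.smul_im, smul_eq_mul, Units.smul_def,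
      zsmul_eq_mul]
    ring

lemma halfForm_sq (ε : ℤˣ) (y : Reduced) :
    halfForm ε y ^ 2 = 2 * (reducedDot y ^ 2 + reducedCross y ^ 2) -
      2 * ε • |cos y.1| * (y.2.re ^ 2 - y.2.im ^ 2) := by
  have hcos : |cos y.1| = |cos (y.1 / 2) + sin (y.1 / 2)| * |cos (y.1 / 2) - sin (y.1 / 2)| := by
    rw [← abs_mul, ← sq_sub_sq, ← cos_two_mul', mul_div_cancel₀ _ two_ne_zero]
  have hsq : ((ε : ℤ) : ℝ) ^ 2 = 1 := by
    obtain rfl | rfl := Int.units_eq_one_or ε <;> simp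
  rw [hcos, halfForm, reducedDot, reducedCross]
  simp only [Units.smul_def, zsmul_eq_mul]
  have hadd := sq_abs (cos (y.1 / 2) + sin (y.1 / 2))
  have hsub := sq_abs (cos (y.1 / 2) - sin (y.1 / 2))
  linear_combination (y.2.re - y.2.im) ^ 2 * hadd + (y.2.re + y.2.im) ^ 2 * hsub +
    (|cos (y.1 / 2) - sin (y.1 / 2)| * (y.2.re + y.2.im)) ^ 2 * hsq

lemma cos_mul_sq_sub_sq (y : Reduced) :
    cos y.1 * (y.2.re ^ 2 - y.2.im ^ 2) = reducedDot y ^ 2 - reducedCross y ^ 2 := by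
  have hcos : cos y.1 = cos (y.1 / 2) ^ 2 - sin (y.1 / 2) ^ 2 := by
    rw [← cos_two_mul', mul_div_cancel₀ _ two_ne_zero]
  rw [hcos, reducedDot, reducedCross]
  ring

lemma units_smul_abs_of_nonneg {ε : ℤˣ} {x : ℝ} (h : 0 ≤ ε • x) : ε • |x| = x := by
  obtain rfl | rfl := Int.units_eq_one_or ε
  · simpa using h
  · rw [Units.neg_smul, one_smul, neg_nonneg] at h
    simp [abs_of_nonpos h]

lemma halfForm_sq_of_nonneg {ε : ℤˣ} {y : Reduced} (h : 0 ≤ ε • cos y.1) :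
    halfForm ε y ^ 2 = 4 * reducedCross y ^ 2 := by
  rw [halfForm_sq, units_smul_abs_of_nonneg h]
  linear_combination (-2) * cos_mul_sq_sub_sq y

lemma halfForm_sq_of_nonpos {ε : ℤˣ} {y : Reduced} (h : ε • cos y.1 ≤ 0) :
    halfForm ε y ^ 2 = 4 * reducedDot y ^ 2 := by
  have hneg : ε • |cos y.1| = -cos y.1 := by
    have := units_smul_abs_of_nonneg (ε := -ε) (x := cos y.1) (by rwa [Units.neg_smul, neg_nonneg])
    rw [Units.neg_smul] at this
    linarith
  rw [halfForm_sq, hneg]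
  linear_combination 2 * cos_mul_sq_sub_sq y

lemma mem_admissibleReduced_neg_one_iff {ε : ℤˣ} {y : Reduced} :
    y ∈ admissibleReduced ε (-1) ↔ y ∈ strip ∧ halfForm ε y ≠ 0 := by
  refine and_congr_right fun _ => ?_
  have hzero {a b : ℝ} (h : a ^ 2 = 4 * b ^ 2) : a ≠ 0 ↔ b ≠ 0 := by
    rw [not_iff_not, ← sq_eq_zero_iff, h]
    simp
  rw [neg_one_mul, Units.neg_smul, neg_pos]
  obtain hlt | heq | hgt := lt_trichotomy (ε • cos y.1) 0
  · simp [hlt, hlt.not_gt, hzero (halfForm_sq_of_nonpos hlt.le)]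
  · have hdot := hzero (halfForm_sq_of_nonpos heq.le)
    have hcross := hzero (halfForm_sq_of_nonneg heq.ge)
    rw [heq, ← hdot, ← hcross]
    simp
  · simp [hgt, hgt.not_gt, hzero (halfForm_sq_of_nonneg hgt.le)]

/-- The half of the strip where `halfForm ε` has sign `s`. -/
def halfStrip (ε s : ℤˣ) : Set Reduced := strip ∩ {y | 0 < s • halfForm ε y}

lemma isOpen_halfStrip (ε s : ℤˣ) : IsOpen (halfStrip ε s) :=
  isOpen_strip.inter (isOpen_lt continuous_const ((continuous_halfForm ε).const_smul s))

lemma exists_halfForm_eq (ε s : ℤˣ) (φ : ℝ) : ∃ ζ : ℂ, halfForm ε (φ, ζ) = s • 4 := by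
  set A := |cos (φ / 2) + sin (φ / 2)| with hA
  set B := |cos (φ / 2) - sin (φ / 2)| with hB
  have hAB : A ^ 2 + B ^ 2 = 2 := by
    rw [hA, hB, sq_abs, sq_abs]
    linear_combination 2 * sin_sq_add_cos_sq (φ / 2)
  refine ⟨s • ⟨A - ε • B, -(A + ε • B)⟩, ?_⟩
  rw [halfForm, ← hA, ← hB]
  obtain rfl | rfl := Int.units_eq_one_or s
  · obtain rfl | rfl := Int.units_eq_one_or ε <;> simp <;> linear_combination 2 * hAB
  · obtain rfl | rfl := Int.units_eq_one_or ε <;> simp <;> linear_combination -2 * hAB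

lemma contractibleSpace_halfStrip (ε s : ℤˣ) : ContractibleSpace (halfStrip ε s) := by
  refine contractibleSpace_prod_univ_inter (convex_Ioo _ _)
    (nonempty_Ioo.2 (by linarith [pi_pos])) (isOpen_halfStrip ε s)
    (fun φ => convex_setOf_pos_units_smul (isLinearMap_halfForm ε φ) s) fun φ _ => ?_
  obtain ⟨ζ, hζ⟩ := exists_halfForm_eq ε s φ
  refine ⟨ζ, ?_⟩
  rw [mem_ofPred_eq, hζ, smul_smul, Int.units_mul_self, one_smul]
  exact four_pos

lemma mem_admissibleReduced_one_iff {ε : ℤˣ} {y : Reduced} :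
    y ∈ admissibleReduced ε 1 ↔
      y ∈ strip ∧ (0 < ε • cos y.1 ∨ reducedDot y ≠ 0 ∧ reducedCross y ≠ 0) := by
  rw [or_and_left, admissibleReduced, one_mul]
  rfl

lemma mem_Icc_or_eq_three_mul_units {n : ℤ} {y : Reduced} (hn : y ∈ sector n) (hy : y ∈ strip) :
    n ∈ Finset.Icc (-2) 2 ∨ ∃ δ : ℤˣ, n = 3 * δ := by
  obtain ⟨hlo, hhi⟩ := hy.1
  obtain ⟨hlo', hhi'⟩ := abs_lt.1 (abs_sub_lt_of_mem_sector hn)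
  have hgt : -4 < n := by
    by_contra! h
    have : (n : ℝ) ≤ -4 := mod_cast h
    nlinarith [pi_pos]
  have hlt : n < 4 := by
    by_contra! h
    have : (4 : ℝ) ≤ n := mod_cast h
    nlinarith [pi_pos]
  obtain rfl | rfl | h : n = 3 ∨ n = -3 ∨ -2 ≤ n ∧ n ≤ 2 := by lia
  exacts [.inr ⟨1, rfl⟩, .inr ⟨-1, rfl⟩, .inl (Finset.mem_Icc.2 h)]

lemma ne_three_mul_units_of_mem_Icc {n : ℤ} (hn : n ∈ Finset.Icc (-2) 2) (δ : ℤˣ) : n ≠ 3 * δ := by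
  rw [Finset.mem_Icc] at hn
  obtain rfl | rfl := Int.units_eq_one_or δ <;> push_cast <;> lia

/-- The labels of the contractible pieces of the sets `admissibleReduced ε κ`. -/
inductive Chamber
  | truncatedSector (n : Finset.Icc (-2 : ℤ) 2)
  | corner (δ s : ℤˣ)
  | halfStrip (ε s : ℤˣ)

namespace Chamber

/-- The signs `(ε, κ)` such that the chamber is a piece of `admissibleReduced ε κ`. -/
def signs : Chamber → ℤˣ × ℤˣ
  | truncatedSector n => (n.1.negOnePow, 1)
  | corner _ _ => (-1, 1)
  | halfStrip ε _ => (ε, -1)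

/-- The piece with a given label. -/
def region : Chamber → Set Reduced
  | truncatedSector n => sector n ∩ strip
  | corner δ s => _root_.corner δ s
  | halfStrip ε s => _root_.halfStrip ε s

lemma isOpen_region : ∀ j : Chamber, IsOpen j.region
  | truncatedSector n => (isOpen_sector n).inter isOpen_strip
  | corner δ s => isOpen_corner δ s
  | halfStrip ε s => isOpen_halfStrip ε s

lemma contractibleSpace_region : ∀ j : Chamber, ContractibleSpace j.region
  | truncatedSector n => contractibleSpace_sector_inter_strip n.2
  | corner δ s => contractibleSpace_corner δ s
  | halfStrip ε s => contractibleSpace_halfStrip ε s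

lemma region_subset (j : Chamber) : j.region ⊆ admissibleReduced j.signs.1 j.signs.2 := by
  intro y hy
  match j with
  | truncatedSector n =>
    exact mem_admissibleReduced_one_iff.2 ⟨hy.2, pos_cos_or_ne_zero_of_mem_sector hy.1⟩
  | corner δ s =>
    obtain ⟨-, hdot, hcross⟩ := mem_corner_iff.1 hy
    exact mem_admissibleReduced_one_iff.2 ⟨hy.1.2, .inr
      ⟨(smul_ne_zero_iff_ne _).1 hdot.ne', (smul_ne_zero_iff_ne _).1 hcross.ne'⟩⟩
  | halfStrip ε s =>
    exact mem_admissibleReduced_neg_one_iff.2 ⟨hy.1, (smul_ne_zero_iff_ne s).1 hy.2.ne'⟩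

lemma exists_mem_region {ε κ : ℤˣ} {y : Reduced} (hy : y ∈ admissibleReduced ε κ) :
    ∃ j : Chamber, j.signs = (ε, κ) ∧ y ∈ j.region := by
  obtain rfl | rfl := Int.units_eq_one_or κ
  · obtain ⟨hstrip, hcos⟩ := mem_admissibleReduced_one_iff.1 hy
    obtain ⟨n, rfl, hn⟩ := exists_mem_sector hcos
    obtain hle | ⟨δ, rfl⟩ := mem_Icc_or_eq_three_mul_units hn hstrip
    · exact ⟨truncatedSector ⟨n, hle⟩, rfl, hn, hstrip⟩
    · have hdot := (mem_sector_three_mul_inter_strip_iff.1 ⟨hn, hstrip⟩).2.ne'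
      rw [smul_ne_zero_iff_ne] at hdot
      obtain ⟨s, hs⟩ := exists_pos_units_smul (left_ne_zero_of_mul hdot)
      exact ⟨corner δ s, by rw [signs, negOnePow_three_mul_units], ⟨hn, hstrip⟩, hs⟩
  · obtain ⟨hstrip, hne⟩ := mem_admissibleReduced_neg_one_iff.1 hy
    obtain ⟨s, hs⟩ := exists_pos_units_smul hne
    exact ⟨halfStrip ε s, rfl, hstrip, hs⟩

lemma eq_of_mem_region {j k : Chamber} {y : Reduced} (hj : y ∈ j.region) (hk : y ∈ k.region)
    (hjk : j.signs = k.signs) : j = k := by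
  obtain ⟨hfst, hsnd⟩ := Prod.ext_iff.1 hjk
  match j, k with
  | truncatedSector m, truncatedSector n =>
    exact congrArg _ (Subtype.ext (eq_of_mem_sector hj.1 hk.1 hfst))
  | truncatedSector n, corner δ _ =>
    exact absurd (eq_of_mem_sector hj.1 hk.1.1 (hfst.trans (negOnePow_three_mul_units δ).symm))
      (ne_three_mul_units_of_mem_Icc n.2 δ)
  | corner δ _, truncatedSector n =>
    exact absurd (eq_of_mem_sector hk.1 hj.1.1 (hfst.symm.trans (negOnePow_three_mul_units δ).symm))
      (ne_three_mul_units_of_mem_Icc n.2 δ)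
  | corner δ s, corner δ' s' =>
    have hδ := eq_of_mem_sector hj.1.1 hk.1.1
      ((negOnePow_three_mul_units δ).trans (negOnePow_three_mul_units δ').symm)
    obtain rfl : δ = δ' := Units.ext (mul_left_cancel₀ three_ne_zero hδ)
    rw [eq_of_pos_units_smul hj.2 hk.2]
  | halfStrip ε s, halfStrip ε' s' =>
    obtain rfl : ε = ε' := hfst
    rw [eq_of_pos_units_smul hj.2 hk.2]
  | truncatedSector _, halfStrip _ _ | corner _ _, halfStrip _ _
  | halfStrip _ _, truncatedSector _ | halfStrip _ _, corner _ _ =>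
    simp [signs] at hsnd

/-- The chambers as a disjoint union of their three kinds, for counting them. -/
def equivSum : Chamber ≃ Finset.Icc (-2 : ℤ) 2 ⊕ (ℤˣ × ℤˣ) ⊕ (ℤˣ × ℤˣ) where
  toFun
    | truncatedSector n => .inl n
    | corner δ s => .inr (.inl (δ, s))
    | halfStrip ε s => .inr (.inr (ε, s))
  invFun
    | .inl n => truncatedSector n
    | .inr (.inl (δ, s)) => corner δ s
    | .inr (.inr (ε, s)) => halfStrip ε s
  left_inv := by rintro (_ | _ | _) <;> rfl
  right_inv := by rintro (_ | _ | _) <;> rfl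

lemma card_eq : Nat.card Chamber = 13 := by
  rw [Nat.card_congr equivSum, Nat.card_eq_fintype_card]
  rfl

end Chamber

end Chambers

section PolarChart

/-- The coordinates `((φ, ζ), (m, r₁, r₂))` standing for the logarithms
`r₁ + i(m + φ/2)` of `u` and `r₂ + i(m - φ/2)` of `±v`, and for `z = ζ e^{im}`. -/
noncomputable def logCoord : Reduced × (ℝ × ℝ × ℝ) ≃ₜ Base where
  toFun x := ((⟨x.2.2.1, x.2.1 + x.1.1 / 2⟩, ⟨x.2.2.2, x.2.1 - x.1.1 / 2⟩),
    x.1.2 * Complex.exp (x.2.1 * Complex.I))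
  invFun b := ((b.1.1.im - b.1.2.im,
      b.2 * Complex.exp (-(((b.1.1.im + b.1.2.im) / 2 : ℝ) * Complex.I))),
    ((b.1.1.im + b.1.2.im) / 2, b.1.1.re, b.1.2.re))
  left_inv x := by
    have hmean : (x.2.1 + x.1.1 / 2 + (x.2.1 - x.1.1 / 2)) / 2 = x.2.1 := by ring
    simp only [hmean, mul_assoc, ← Complex.exp_add, add_neg_cancel, Complex.exp_zero, mul_one]
    ring_nf
  right_inv b := by
    refine Prod.ext (Prod.ext (Complex.ext rfl ?_) (Complex.ext rfl ?_)) ?_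
    · ring
    · ring
    · simp only [mul_assoc, ← Complex.exp_add, neg_add_cancel, Complex.exp_zero, mul_one]
  continuous_toFun := ((continuous_complex_mk (by fun_prop) (by fun_prop)).prodMk
    (continuous_complex_mk (by fun_prop) (by fun_prop))).prodMk (by fun_prop)
  continuous_invFun := by fun_prop

/-- The chart `((φ, ζ), (m, r₁, r₂)) ↦ ((u, v), z)` with `u = exp (r₁ + i(m + φ/2))`,
`v = ε exp (r₂ + i(m - φ/2))` and `z = ζ e^{im}`, onto the set where `u` and `ε v` avoid the
negative real axis. -/
noncomputable def polarChart (ε : ℤˣ) : OpenPartialHomeomorph (Reduced × (ℝ × ℝ × ℝ)) Base :=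
  (logCoord.toOpenPartialHomeomorph.trans
    ((Complex.expOpenPartialHomeomorph.prod Complex.expOpenPartialHomeomorph).prod
      (.refl ℂ))).trans
  (((Homeomorph.refl ℂ).prodCongr (Homeomorph.smul ε)).prodCongr
    (Homeomorph.refl ℂ)).toOpenPartialHomeomorph

lemma mem_polarChart_source_iff {ε : ℤˣ} {x : Reduced × (ℝ × ℝ × ℝ)} :
    x ∈ (polarChart ε).source ↔ x.2.1 + x.1.1 / 2 ∈ Ioo (-Real.pi) Real.pi ∧
      x.2.1 - x.1.1 / 2 ∈ Ioo (-Real.pi) Real.pi := by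
  simp [polarChart, logCoord, Complex.expOpenPartialHomeomorph]

lemma polarChart_apply (ε : ℤˣ) (x : Reduced × (ℝ × ℝ × ℝ)) :
    polarChart ε x = ((Complex.exp ⟨x.2.2.1, x.2.1 + x.1.1 / 2⟩,
      ε • Complex.exp ⟨x.2.2.2, x.2.1 - x.1.1 / 2⟩), x.1.2 * Complex.exp (x.2.1 * Complex.I)) :=
  rfl

lemma polarChart_target (ε : ℤˣ) :
    (polarChart ε).target = {b | b.1.1 ∈ Complex.slitPlane ∧ ε • b.1.2 ∈ Complex.slitPlane} := by
  ext b
  obtain rfl | rfl := Int.units_eq_one_or ε <;>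
    simp [polarChart, Complex.expOpenPartialHomeomorph]

lemma dot_units_smul_left (s : ℤˣ) (v u : ℂ) : dot (s • v) u = s • dot v u := by
  obtain rfl | rfl := Int.units_eq_one_or s
  · simp only [one_smul]
  · simp only [dot_eq, Units.neg_smul, one_smul, Complex.neg_re, Complex.neg_im]
    ring

lemma dot_polarChart (ε : ℤˣ) (x : Reduced × (ℝ × ℝ × ℝ)) :
    dot (polarChart ε x).1.2 (polarChart ε x).1.1 =
      Real.exp (x.2.2.1 + x.2.2.2) * ε • Real.cos x.1.1 := by
  have hangle : x.1.1 = x.2.1 + x.1.1 / 2 - (x.2.1 - x.1.1 / 2) := by ring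
  have hcos := congrArg Real.cos hangle
  rw [Real.cos_sub] at hcos
  rw [polarChart_apply, dot_units_smul_left, dot_eq, mul_smul_comm, hcos, Real.exp_add]
  simp only [Complex.exp_re, Complex.exp_im]
  ring_nf

lemma dot_polarChart_right (ε : ℤˣ) (x : Reduced × (ℝ × ℝ × ℝ)) :
    dot (polarChart ε x).1.2 (polarChart ε x).2 = Real.exp x.2.2.2 * ε • reducedDot x.1 := by
  have hangle : x.1.1 / 2 = x.2.1 - (x.2.1 - x.1.1 / 2) := by ring
  have hcos := congrArg Real.cos hangle
  have hsin := congrArg Real.sin hangle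
  rw [Real.cos_sub] at hcos
  rw [Real.sin_sub] at hsin
  rw [polarChart_apply, dot_units_smul_left, dot_eq, mul_smul_comm, reducedDot, hcos, hsin]
  simp only [Complex.mul_re, Complex.mul_im, Complex.exp_ofReal_mul_I_re,
    Complex.exp_ofReal_mul_I_im]
  simp only [Complex.exp_re, Complex.exp_im]
  ring_nf

lemma cross_polarChart (ε : ℤˣ) (x : Reduced × (ℝ × ℝ × ℝ)) :
    cross (polarChart ε x).2 (polarChart ε x).1.1 = Real.exp x.2.2.1 * reducedCross x.1 := by
  have hangle : x.1.1 / 2 = x.2.1 + x.1.1 / 2 - x.2.1 := by ring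
  have hcos := congrArg Real.cos hangle
  have hsin := congrArg Real.sin hangle
  rw [Real.cos_sub] at hcos
  rw [Real.sin_sub] at hsin
  rw [polarChart_apply, cross_eq, reducedCross, hcos, hsin]
  simp only [Complex.mul_re, Complex.mul_im, Complex.exp_ofReal_mul_I_re,
    Complex.exp_ofReal_mul_I_im]
  simp only [Complex.exp_re, Complex.exp_im]
  ring

lemma mem_strip_of_mem_polarChart_source {ε : ℤˣ} {x : Reduced × (ℝ × ℝ × ℝ)}
    (hx : x ∈ (polarChart ε).source) : x.1 ∈ strip := by
  obtain ⟨hu, hv⟩ := mem_polarChart_source_iff.1 hx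
  exact ⟨⟨by linarith [hu.1, hv.2], by linarith [hu.2, hv.1]⟩, mem_univ _⟩

lemma polarChart_mem_admissibleBase_iff {ε κ : ℤˣ} {x : Reduced × (ℝ × ℝ × ℝ)}
    (hx : x ∈ (polarChart ε).source) :
    polarChart ε x ∈ admissibleBase ε κ ↔ x.1 ∈ admissibleReduced ε κ := by
  obtain ⟨hu, hv⟩ := polarChart_target ε ▸ (polarChart ε).map_source hx
  have hexp (r a : ℝ) : Real.exp r * a ≠ 0 ↔ a ≠ 0 := mul_ne_zero_iff_left (Real.exp_ne_zero r)
  simp only [admissibleBase, admissibleReduced, mem_ofPred_eq, dot_polarChart,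
    dot_polarChart_right, cross_polarChart, hexp, smul_ne_zero_iff_ne, ← mul_smul_comm, smul_smul,
    mul_pos_iff_of_pos_left (Real.exp_pos _), hu, hv, true_and,
    mem_strip_of_mem_polarChart_source hx]

lemma admissibleBase_subset_polarChart_target (ε κ : ℤˣ) :
    admissibleBase ε κ ⊆ (polarChart ε).target := by
  rw [polarChart_target]
  exact fun b hb => ⟨hb.1, hb.2.1⟩

lemma convex_polarChart_source_fiber (ε : ℤˣ) (y : Reduced) :
    Convex ℝ {t | (y, t) ∈ (polarChart ε).source} := by
  simp only [mem_polarChart_source_iff]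
  have hconv (c : ℝ) : Convex ℝ {t : ℝ × ℝ × ℝ | t.1 + c ∈ Ioo (-Real.pi) Real.pi} :=
    ((convex_Ioo _ _).translate_preimage_left c).linear_preimage (LinearMap.fst ℝ ℝ (ℝ × ℝ))
  exact (hconv (y.1 / 2)).inter (hconv (-(y.1 / 2)))

lemma fst_image_polarChart_source (ε : ℤˣ) : Prod.fst '' (polarChart ε).source = strip := by
  refine Subset.antisymm (image_subset_iff.2 fun x => mem_strip_of_mem_polarChart_source) ?_
  rintro y ⟨hy, -⟩
  exact ⟨(y, (0, 0, 0)), mem_polarChart_source_iff.2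
    ⟨⟨by linarith [hy.1], by linarith [hy.2]⟩, ⟨by linarith [hy.2], by linarith [hy.1]⟩⟩, rfl⟩

lemma contractibleSpace_image_polarChart (ε : ℤˣ) {R : Set Reduced} (hR : IsOpen R)
    (hstrip : R ⊆ strip) [ContractibleSpace R] :
    ContractibleSpace ↥(polarChart ε '' ((polarChart ε).source ∩ Prod.fst ⁻¹' R)) := by
  have himage : Prod.fst '' ((polarChart ε).source ∩ Prod.fst ⁻¹' R) = R := by
    rw [image_inter_preimage, fst_image_polarChart_source, inter_eq_right.2 hstrip]
  have : ContractibleSpace (Prod.fst '' ((polarChart ε).source ∩ Prod.fst ⁻¹' R)) :=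
    himage.symm ▸ ‹ContractibleSpace R›
  have hconv (y : Reduced) :
      Convex ℝ {t | (y, t) ∈ (polarChart ε).source ∩ Prod.fst ⁻¹' R} :=
    (convex_polarChart_source_fiber ε y).inter fun _ ht _ _ _ _ _ _ _ => ht
  have := contractibleSpace_of_convex_fibers
    ((polarChart ε).open_source.inter (hR.preimage continuous_fst)) hconv
  exact ((polarChart ε).homeomorphOfImageSubsetSource inter_subset_left rfl).symm.contractibleSpace

namespace Chamber

/-- The piece of `admissibleBase` corresponding to `Chamber.region` under `polarChart`. -/
def baseRegion (j : Chamber) : Set Base :=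
  polarChart j.signs.1 '' ((polarChart j.signs.1).source ∩ Prod.fst ⁻¹' j.region)

lemma isOpen_baseRegion (j : Chamber) : IsOpen j.baseRegion :=
  (polarChart _).isOpen_image_of_subset_source
    ((polarChart _).open_source.inter (j.isOpen_region.preimage continuous_fst)) inter_subset_left

lemma contractibleSpace_baseRegion (j : Chamber) : ContractibleSpace j.baseRegion :=
  have := j.contractibleSpace_region
  contractibleSpace_image_polarChart _ j.isOpen_region fun _ hy => (j.region_subset hy).1

lemma baseRegion_subset (j : Chamber) : j.baseRegion ⊆ admissibleBase j.signs.1 j.signs.2 := by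
  rintro - ⟨x, ⟨hx, hj⟩, rfl⟩
  exact (polarChart_mem_admissibleBase_iff hx).2 (j.region_subset hj)

lemma exists_mem_baseRegion {ε κ : ℤˣ} {b : Base} (hb : b ∈ admissibleBase ε κ) :
    ∃ j : Chamber, j.signs = (ε, κ) ∧ b ∈ j.baseRegion := by
  have htarget := admissibleBase_subset_polarChart_target ε κ hb
  have hsource := (polarChart ε).map_target htarget
  have hright := (polarChart ε).right_inv htarget
  obtain ⟨j, hsigns, hj⟩ := exists_mem_region
    ((polarChart_mem_admissibleBase_iff hsource).1 (hright.symm ▸ hb))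
  exact ⟨j, hsigns, _, ⟨by rwa [hsigns], hj⟩, by rwa [hsigns]⟩

lemma eq_of_mem_baseRegion {j k : Chamber} {b : Base} (hj : b ∈ j.baseRegion)
    (hk : b ∈ k.baseRegion) (hjk : j.signs = k.signs) : j = k := by
  obtain ⟨x, ⟨hxj, hx⟩, rfl⟩ := hj
  obtain ⟨y, ⟨hyk, hy⟩, hxy⟩ := hk
  rw [← hjk] at hyk hxy
  obtain rfl := (polarChart _).injOn hyk hxj hxy
  exact eq_of_mem_region hx hy hjk

end Chamber

end PolarChart

section Pieces

/-- The labels of the connected components of `BL 5 η5`. -/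
abbrev PieceIndex : Type := (ℤˣ × ℤˣ) × Chamber

/-- The part of `signCell ![ε, 1, κ, 1]` over a chamber with signs `(ε, κ)`. -/
def normalizedPiece (j : Chamber) : Set Coord :=
  signCell ![j.signs.1, 1, j.signs.2, 1] ∩ Prod.fst ⁻¹' j.baseRegion

lemma isOpen_normalizedPiece (j : Chamber) : IsOpen (normalizedPiece j) :=
  (isOpen_signCell _).inter (j.isOpen_baseRegion.preimage continuous_fst)

lemma contractibleSpace_normalizedPiece (j : Chamber) : ContractibleSpace (normalizedPiece j) := by
  have himage : Prod.fst '' normalizedPiece j = j.baseRegion := by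
    rw [normalizedPiece, image_inter_preimage, image_fst_signCell,
      inter_eq_right.2 j.baseRegion_subset]
  have : ContractibleSpace (Prod.fst '' normalizedPiece j) :=
    himage.symm ▸ j.contractibleSpace_baseRegion
  exact contractibleSpace_of_convex_fibers (isOpen_normalizedPiece j) fun b =>
    (convex_signCell_fiber _ b).inter fun _ ht _ _ _ _ _ _ _ => ht

/-- The piece of the coordinate space with a given label; it will turn out to be a connected
component of the locus of nonvanishing south-west minors. -/
def piece (p : PieceIndex) : Set Coord :=
  signFlip p.1.1 p.1.2 ⁻¹' normalizedPiece p.2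

lemma signFlip_mem_signCell_iff {s₁ s₂ ε κ : ℤˣ} {x : Coord} :
    signFlip s₁ s₂ x ∈ signCell ![ε, 1, κ, 1] ↔ x ∈ signCell ![ε * s₁, s₂, κ * s₂, s₁] := by
  simp only [signCell, mem_ofPred_eq, swMinor_signFlip, smul_smul]
  refine forall_congr' fun i => ?_
  fin_cases i <;> simp

lemma mem_piece_iff {p : PieceIndex} {x : Coord} :
    x ∈ piece p ↔
      x ∈ signCell ![p.2.signs.1 * p.1.1, p.1.2, p.2.signs.2 * p.1.2, p.1.1] ∧
        (signFlip p.1.1 p.1.2 x).1 ∈ p.2.baseRegion :=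
  and_congr_left' signFlip_mem_signCell_iff

lemma isOpen_piece (p : PieceIndex) : IsOpen (piece p) :=
  (isOpen_normalizedPiece p.2).preimage (signFlip _ _).continuous

lemma contractibleSpace_piece (p : PieceIndex) : ContractibleSpace (piece p) :=
  have := contractibleSpace_normalizedPiece p.2
  contractibleSpace_preimage_of_isEmbedding (signFlip _ _).isEmbedding
    ((signFlip _ _).range_coe.symm ▸ subset_univ _)

lemma eq_of_mem_signCell {σ τ : Fin 4 → ℤˣ} {x : Coord} (hσ : x ∈ signCell σ)
    (hτ : x ∈ signCell τ) : σ = τ :=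
  funext fun i => eq_of_pos_units_smul (hσ i) (hτ i)

lemma pairwise_disjoint_piece : Pairwise (Disjoint on piece) := by
  refine fun p q hpq => Set.disjoint_left.2 fun x hp hq => hpq ?_
  obtain ⟨⟨s₁, s₂⟩, j⟩ := p
  obtain ⟨⟨t₁, t₂⟩, k⟩ := q
  obtain ⟨hsp, hj⟩ := mem_piece_iff.1 hp
  obtain ⟨hsq, hk⟩ := mem_piece_iff.1 hq
  have hsigns := eq_of_mem_signCell hsp hsq
  obtain rfl : s₁ = t₁ := congrFun hsigns 3
  obtain rfl : s₂ = t₂ := congrFun hsigns 1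
  have hε : j.signs.1 = k.signs.1 := mul_right_cancel (congrFun hsigns 0)
  have hκ : j.signs.2 = k.signs.2 := mul_right_cancel (congrFun hsigns 2)
  exact congrArg _ (Chamber.eq_of_mem_baseRegion hj hk (Prod.ext hε hκ))

lemma iUnion_piece : ⋃ p, piece p = {x | ∀ i, swMinor x.1 x.2 i ≠ 0} := by
  ext x
  simp only [mem_iUnion, mem_ofPred_eq]
  constructor
  · rintro ⟨p, hp⟩ i
    exact (smul_ne_zero_iff_ne _).1 ((mem_piece_iff.1 hp).1 i).ne'
  · intro hx
    choose σ hσ using fun i => exists_pos_units_smul (hx i)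
    have hcell : signFlip (σ 3) (σ 1) x ∈ signCell ![σ 0 * σ 3, 1, σ 2 * σ 1, 1] := by
      rw [signFlip_mem_signCell_iff]
      intro i
      fin_cases i
      exacts [by simpa [mul_assoc] using hσ 0, hσ 1, by simpa [mul_assoc] using hσ 2, hσ 3]
    obtain ⟨j, hsigns, hj⟩ := Chamber.exists_mem_baseRegion
      (image_fst_signCell _ _ ▸ mem_image_of_mem Prod.fst hcell)
    refine ⟨((σ 3, σ 1), j), ?_, hj⟩
    simpa only [hsigns] using hcell

lemma card_pieceIndex : Nat.card PieceIndex = 52 := by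
  rw [Nat.card_prod, Nat.card_prod, Chamber.card_eq, Nat.card_eq_fintype_card,
    Fintype.card_units_int]

end Pieces

section Components

/-- The connected component of `BL 5 η5` with a given label. -/
def component (p : PieceIndex) : Set (BL 5 η5) :=
  (fun L : BL 5 η5 => ofMatrix L) ⁻¹' piece p

lemma isOpen_component (p : PieceIndex) : IsOpen (component p) :=
  (isOpen_piece p).preimage isEmbedding_ofMatrix_BL.continuous

lemma contractibleSpace_component (p : PieceIndex) : ContractibleSpace (component p) :=
  have := contractibleSpace_piece p
  contractibleSpace_preimage_of_isEmbedding isEmbedding_ofMatrix_BL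
    ((subset_iUnion piece p).trans (iUnion_piece.trans range_ofMatrix_BL.symm).subset)

lemma isConnected_component (p : PieceIndex) : IsConnected (component p) :=
  have := contractibleSpace_component p
  isConnected_iff_connectedSpace.2 inferInstance

lemma pairwise_disjoint_component : Pairwise (Disjoint on component) :=
  fun _ _ hpq => (pairwise_disjoint_piece hpq).preimage _

lemma iUnion_component : ⋃ p, component p = univ := by
  simp only [component, ← preimage_iUnion]
  rw [iUnion_piece, ← range_ofMatrix_BL, preimage_range]

end Components

/-- `BL_η ⊂ Lo¹₅` for the longest element `η ∈ S₅` (the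
intersection of two open big Bruhat cells in general position) has exactly 52
connected components, all of which are contractible. -/
theorem stmt7 :
    Nat.card (ConnectedComponents ↥(BL 5 η5)) = 52 ∧
      ∀ L : ↥(BL 5 η5), ContractibleSpace ↥(connectedComponent L) := by
  refine ⟨?_, fun L => ?_⟩
  · rw [natCard_connectedComponents_of_isOpen_partition isOpen_component isConnected_component
      pairwise_disjoint_component iUnion_component, card_pieceIndex]
  · obtain ⟨p, hp⟩ := mem_iUnion.1 (iUnion_component.symm ▸ mem_univ L)
    rw [connectedComponent_eq_of_isOpen_partition isOpen_component isConnected_component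
      pairwise_disjoint_component iUnion_component hp]
    exact contractibleSpace_component p
end
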